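/- arXiv:2102.11226 — 2 statements merged into one kernel-verified Lean document; each statement's English description precedes it below -/
import Mathlib

section
/- Let X be a strictly convex normed plane. A Jordan curve C ⊂ X encloses a convex region if and only if for every three collinear points z¹, z², z³ ∈ C with z² between z¹ and z³, the segment [z¹, z³] is contained in C. Consequently, if C_X encloses a convex region, τ : C_X → C_Y is an isometry onto a Jordan curve C_Y in a strictly convex normed plane Y, then C_Y also encloses a convex region. -/
/-- A Jordan curve in a normed plane: the range of a continuous, `1`-periodic map that
is injective on a fundamental domain. -/
def IsJordanCurve {X : Type*} [NormedAddCommGroup X] [NormedSpace ℝ X]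
    (C : Set X) : Prop :=
  ∃ f : ℝ → X, Continuous f ∧ Function.Periodic f 1 ∧
    Set.InjOn f (Set.Ico (0:ℝ) 1) ∧ Set.range f = C

/-- A Jordan curve encloses a convex region when it is the frontier of a compact convex
body with nonempty interior. -/
def EnclosesConvex {X : Type*} [NormedAddCommGroup X] [NormedSpace ℝ X]
    (C : Set X) : Prop :=
  ∃ K : Set X, IsCompact K ∧ Convex ℝ K ∧ (interior K).Nonempty ∧ C = frontier K

/-!
The boundary of a convex body contains every chord that it meets in a third point, since a chord
through an interior point has its open half-chords in the interior. Conversely, let a planar Jordan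
curve `C` contain all such chords. If a point `p` of `C` were interior to the closed convex hull of
`C`, the connected set `C \ {p}` would lie in no closed half-plane through `p`, so two lines through
`p` would meet it on both sides of `p`; then `C` would contain three segments leaving `p` in
different directions, although a Jordan curve leaves each of its points along two ends only. Hence
`C` lies on the boundary of its closed convex hull, and it is the whole boundary, because the
boundary minus a point embeds in the line and the circle does not.

In strictly convex spaces betweenness, hence the condition on chords, is metric, so it is carried
over by isometries.
-/

open Set Filter Topology

section AddCircle

variable {p : ℝ} [Fact (0 < p)]

theorem not_injective_of_continuous_addCircle {g : AddCircle p → ℝ} (hg : Continuous g) :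
    ¬ Function.Injective g := by
  intro hinj
  set c : AddCircle p := ((p / 2 : ℝ) : AddCircle p) with hc
  have hcc : c + c = 0 := by
    rw [hc, ← AddCircle.coe_add, add_halves, AddCircle.coe_period]
  have hc0 : c ≠ 0 := fun h ↦ by
    have hp : 0 < p := Fact.out
    have := (AddCircle.coe_eq_zero_iff_of_mem_Ico ⟨by positivity, half_lt_self hp⟩).1 h
    linarith
  -- `h` changes sign under the half turn, so it vanishes and `g` identifies two opposite points.
  let h : AddCircle p → ℝ := fun x ↦ g (x + c) - g x
  have hodd : h c = -h 0 := by simp only [h, hcc, zero_add, neg_sub]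
  obtain ⟨x, hx⟩ : (0 : ℝ) ∈ range h := by
    refine mem_range_of_exists_le_of_exists_ge (by fun_prop) ?_ ?_ <;>
    rcases le_total (h 0) 0 with h0 | h0
    exacts [⟨0, h0⟩, ⟨c, by linarith⟩, ⟨c, by linarith⟩, ⟨0, h0⟩]
  exact hc0 (add_eq_left.1 (hinj (sub_eq_zero.1 hx)))

theorem isPreconnected_compl_zero_addCircle : IsPreconnected ({0}ᶜ : Set (AddCircle p)) := by
  have h := (AddCircle.openPartialHomeomorphCoe p 0).image_source_eq_target
  simp only [AddCircle.openPartialHomeomorphCoe_source, AddCircle.openPartialHomeomorphCoe_target,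
    AddCircle.coe_zero] at h
  rw [← h]
  exact isPreconnected_Ioo.image _ (AddCircle.continuous_mk' p).continuousOn

theorem exists_ordConnected_image_coe_addCircle_eq {T : Set (AddCircle p)} (hT : IsPreconnected T)
    (h0 : 0 ∉ T) : ∃ J ⊆ Ioo 0 p, J.OrdConnected ∧ ((↑) : ℝ → AddCircle p) '' J = T := by
  let φ := AddCircle.openPartialHomeomorphCoe p 0
  have hTφ : T ⊆ φ.target := fun x hx hx0 ↦ h0 (by simpa [mem_singleton_iff.1 hx0] using hx)
  refine ⟨φ.symm '' T, ?_, (hT.image _ (φ.continuousOn_symm.mono hTφ)).ordConnected,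
    φ.image_symm_image_of_subset_target hTφ⟩
  rintro _ ⟨x, hx, rfl⟩
  simpa [φ] using φ.map_target (hTφ hx)

theorem eventually_coe_addCircle_mem_of_isPreconnected {T : Set (AddCircle p)}
    (hT : IsPreconnected T) (h0 : 0 ∉ T) (hcl : 0 ∈ closure T) :
    (∀ᶠ t : ℝ in 𝓝[>] 0, (t : AddCircle p) ∈ T) ∨ ∀ᶠ t : ℝ in 𝓝[<] p, (t : AddCircle p) ∈ T := by
  obtain ⟨J, hJ, hord, rfl⟩ := exists_ordConnected_image_coe_addCircle_eq hT h0
  obtain ⟨c, hc⟩ : J.Nonempty := (closure_nonempty_iff.1 ⟨0, hcl⟩).of_image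
  by_contra! ⟨hl, hr⟩
  obtain ⟨x, hxT, hx⟩ := (hl.and_eventually (Ioo_mem_nhdsGT (hJ hc).1)).exists
  obtain ⟨y, hyT, hy⟩ := (hr.and_eventually (Ioo_mem_nhdsLT (hJ hc).2)).exists
  have hJxy : J ⊆ Icc x y := fun t ht ↦
    ⟨le_of_not_gt fun h ↦ hxT ⟨x, hord.out ht hc ⟨h.le, hx.2.le⟩, rfl⟩,
      le_of_not_gt fun h ↦ hyT ⟨y, hord.out hc ht ⟨hy.1.le, h.le⟩, rfl⟩⟩
  have hclosed : IsClosed (((↑) : ℝ → AddCircle p) '' Icc x y) :=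
    (isCompact_Icc.image (AddCircle.continuous_mk' p)).isClosed
  obtain ⟨t, ht, ht0⟩ := closure_minimal (image_mono hJxy) hclosed hcl
  have ht_pos : 0 < t := hx.1.trans_le ht.1
  exact ht_pos.ne' ((AddCircle.coe_eq_zero_iff_of_mem_Ico ⟨ht_pos.le, ht.2.trans_lt hy.2⟩).1 ht0)

theorem eventually_apply_coe_addCircle_mem_of_isEmbedding {X : Type*} [TopologicalSpace X]
    {f : AddCircle p → X} (hf : IsEmbedding f) {σ : Set X} (hσ : IsPreconnected σ)
    (hsub : σ ⊆ range f) (h0 : f 0 ∉ σ) (hcl : f 0 ∈ closure σ) :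
    (∀ᶠ t : ℝ in 𝓝[>] 0, f t ∈ σ) ∨ ∀ᶠ t : ℝ in 𝓝[<] p, f t ∈ σ := by
  have himg : f '' (f ⁻¹' σ) = σ := image_preimage_eq_of_subset hsub
  refine eventually_coe_addCircle_mem_of_isPreconnected (T := f ⁻¹' σ) ?_ h0 ?_
  · rwa [← hf.isInducing.isPreconnected_image, himg]
  · rwa [hf.isInducing.closure_eq_preimage_closure_image, himg]

end AddCircle

theorem sameRay_of_mem_openSegment {E : Type*} [AddCommGroup E] [Module ℝ E]
    {p a b x : E} (ha : x ∈ openSegment ℝ p a) (hb : x ∈ openSegment ℝ p b) (hap : a ≠ p) :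
    SameRay ℝ (a - p) (b - p) := by
  have hxp : x ≠ p := fun h ↦ hap (left_mem_openSegment_iff.1 (h ▸ ha)).symm
  have hray : ∀ {y}, x ∈ openSegment ℝ p y → SameRay ℝ (x - p) (y - p) := fun hy ↦
    (mem_segment_iff_wbtw.1 (openSegment_subset_segment ℝ _ _ hy)).sameRay_vsub_left
  exact (hray ha).symm.trans (hray hb) fun h ↦ (hxp (sub_eq_zero.1 h)).elim

namespace IsJordanCurve

variable {X : Type*} [NormedAddCommGroup X] [NormedSpace ℝ X] {C : Set X}

theorem exists_isEmbedding_addCircle (hC : IsJordanCurve C) :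
    ∃ f : AddCircle (1 : ℝ) → X, IsEmbedding f ∧ range f = C := by
  obtain ⟨f, hf, hper, hinj, rfl⟩ := hC
  have hlift : Continuous hper.lift := continuous_coinduced_dom.2 hf
  have hlift_inj : Function.Injective hper.lift := fun x y hxy ↦ by
    obtain ⟨s, hs, rfl⟩ := AddCircle.eq_coe_Ico x
    obtain ⟨t, ht, rfl⟩ := AddCircle.eq_coe_Ico y
    exact congrArg _ (hinj hs ht hxy)
  exact ⟨hper.lift, (hlift.isClosedEmbedding hlift_inj).isEmbedding, range_quot_lift _⟩

theorem exists_isEmbedding_addCircle_zero (hC : IsJordanCurve C) {p : X} (hp : p ∈ C) :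
    ∃ f : AddCircle (1 : ℝ) → X, IsEmbedding f ∧ range f = C ∧ f 0 = p := by
  obtain ⟨f, hf, rfl⟩ := hC.exists_isEmbedding_addCircle
  obtain ⟨a, rfl⟩ := hp
  let e := Homeomorph.addRight a
  exact ⟨f ∘ e, hf.comp e.isEmbedding, e.surjective.range_comp f, by simp [e]⟩

theorem image {Y : Type*} [NormedAddCommGroup Y] [NormedSpace ℝ Y] (hC : IsJordanCurve C)
    {g : X → Y} (hg : Continuous g) (hinj : Function.Injective g) : IsJordanCurve (g '' C) := by
  obtain ⟨f, hf, hper, hinjOn, rfl⟩ := hC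
  exact ⟨g ∘ f, hg.comp hf, hper.comp g, hinj.comp_injOn hinjOn, range_comp g f⟩

theorem isCompact (hC : IsJordanCurve C) : IsCompact C := by
  obtain ⟨f, hf, rfl⟩ := hC.exists_isEmbedding_addCircle
  exact isCompact_range hf.continuous

theorem not_injOn (hC : IsJordanCurve C) {g : X → ℝ} (hg : ContinuousOn g C) : ¬ InjOn g C := by
  obtain ⟨f, hf, rfl⟩ := hC.exists_isEmbedding_addCircle
  exact fun hinj ↦ not_injective_of_continuous_addCircle
    (hg.comp_continuous hf.continuous fun x ↦ mem_range_self x)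
    fun x y hxy ↦ hf.injective (hinj ⟨x, rfl⟩ ⟨y, rfl⟩ hxy)

theorem isPreconnected_diff_singleton (hC : IsJordanCurve C) {p : X} (hp : p ∈ C) :
    IsPreconnected (C \ {p}) := by
  obtain ⟨f, hf, rfl, rfl⟩ := hC.exists_isEmbedding_addCircle_zero hp
  rw [← image_singleton, ← image_compl_eq_range_sdiff_image hf.injective]
  exact isPreconnected_compl_zero_addCircle.image f hf.continuous.continuousOn

theorem not_collinear (hC : IsJordanCurve C) : ¬ Collinear ℝ C := fun hcol ↦ by
  obtain ⟨p, v, hline⟩ := (collinear_iff_exists_forall_eq_smul_vadd _).1 hcol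
  rcases eq_or_ne v 0 with rfl | hv
  · simp only [smul_zero, zero_vadd, exists_const] at hline
    exact hC.not_injOn (g := 0) continuousOn_const fun x hx y hy _ ↦
      (hline x hx).trans (hline y hy).symm
  obtain ⟨g, hg⟩ := SeparatingDual.exists_eq_one (R := ℝ) hv
  refine hC.not_injOn g.continuous.continuousOn fun x hx y hy hxy ↦ ?_
  obtain ⟨r, rfl⟩ := hline x hx
  obtain ⟨s, rfl⟩ := hline y hy
  obtain rfl : r = s := by simpa [hg] using hxy
  rfl

theorem exists_sameRay_of_segments_subset (hC : IsJordanCurve C) {p a b c : X}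
    (ha : segment ℝ p a ⊆ C) (hb : segment ℝ p b ⊆ C) (hc : segment ℝ p c ⊆ C) :
    SameRay ℝ (a - p) (b - p) ∨ SameRay ℝ (a - p) (c - p) ∨ SameRay ℝ (b - p) (c - p) := by
  rcases eq_or_ne a p with rfl | ha0
  · simp
  rcases eq_or_ne b p with rfl | hb0
  · simp
  rcases eq_or_ne c p with rfl | hc0
  · simp
  obtain ⟨f, hf, rfl, rfl⟩ := hC.exists_isEmbedding_addCircle_zero (ha (left_mem_segment ℝ p a))
  have hend : ∀ x, segment ℝ (f 0) x ⊆ range f → x ≠ f 0 →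
      (∀ᶠ t : ℝ in 𝓝[>] 0, f t ∈ openSegment ℝ (f 0) x) ∨
        ∀ᶠ t : ℝ in 𝓝[<] 1, f t ∈ openSegment ℝ (f 0) x := fun x hx hx0 ↦ by
    refine eventually_apply_coe_addCircle_mem_of_isEmbedding hf
      (convex_openSegment _ _).isPreconnected ((openSegment_subset_segment ℝ _ _).trans hx)
      (mt left_mem_openSegment_iff.1 hx0.symm) ?_
    rw [closure_openSegment]
    exact left_mem_segment ℝ _ _
  have hray : ∀ {l : Filter ℝ} [l.NeBot] {x y : X}, x ≠ f 0 →
      (∀ᶠ t : ℝ in l, f t ∈ openSegment ℝ (f 0) x) →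
      (∀ᶠ t : ℝ in l, f t ∈ openSegment ℝ (f 0) y) → SameRay ℝ (x - f 0) (y - f 0) := by
    intro l _ x y hx0 hx hy
    obtain ⟨t, htx, hty⟩ := (hx.and hy).exists
    exact sameRay_of_mem_openSegment htx hty hx0
  -- Each segment contains one of the two ends of the curve at `p`, so two of them share an end.
  rcases hend a ha ha0 with ha | ha <;> rcases hend b hb hb0 with hb | hb <;>
    rcases hend c hc hc0 with hc | hc
  all_goals
    first
    | exact .inl (hray ha0 ha hb)
    | exact .inr (.inl (hray ha0 ha hc))
    | exact .inr (.inr (hray hb0 hb hc))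

end IsJordanCurve

/-- A set is chord-saturated if it contains every chord which meets it in a point other than the
two ends of the chord. -/
def IsChordSaturated {X : Type*} [AddCommGroup X] [Module ℝ X] (C : Set X) : Prop :=
  ∀ ⦃x⦄, x ∈ C → ∀ ⦃y⦄, y ∈ C → ∀ ⦃z⦄, z ∈ C → Sbtw ℝ x y z → segment ℝ x z ⊆ C

section Frontier

variable {E : Type*} [AddCommGroup E] [Module ℝ E] [TopologicalSpace E] [IsTopologicalAddGroup E]
  [ContinuousConstSMul ℝ E] {K : Set E}

theorem eq_of_mem_frontier_of_sameRay (hK : Convex ℝ K) {c x y : E} (hc : c ∈ interior K)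
    (hx : x ∈ frontier K) (hy : y ∈ frontier K) (hxy : SameRay ℝ (x - c) (y - c)) : x = y := by
  have heq : ∀ {a b : E}, a ∈ frontier K → b ∈ frontier K → Wbtw ℝ c a b → a = b := by
    intro a b ha hb hab
    by_contra hne
    refine ha.2 (hK.openSegment_interior_closure_subset_interior hc hb.1
      (mem_openSegment_of_ne_left_right ?_ (Ne.symm hne) hab.mem_segment))
    rintro rfl
    exact ha.2 hc
  rcases wbtw_total_of_sameRay_vsub_left (P := E) hxy with h | h
  · exact heq hx hy h
  · exact (heq hy hx h).symm

theorem isChordSaturated_frontier_of_convex (hK : Convex ℝ K) :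
    IsChordSaturated (frontier K) := by
  intro x hx y hy z hz hxyz w hw
  refine ⟨hK.closure.segment_subset hx.1 hz.1 hw, fun hwi ↦ hy.2 ?_⟩
  have hyw : y ∈ insert w (openSegment ℝ x w ∪ openSegment ℝ w z) := by
    refine openSegment_subset_union x z ?_
      (mem_openSegment_of_ne_left_right hxyz.2.1.symm hxyz.2.2.symm hxyz.wbtw.mem_segment)
    rw [segment_eq_image_lineMap] at hw
    exact image_subset_range _ _ hw
  rcases hyw with rfl | h | h
  · exact hwi
  · exact hK.openSegment_closure_interior_subset_interior hx.1 hwi h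
  · exact hK.openSegment_interior_closure_subset_interior hwi hz.1 h

end Frontier

section ConvexHull

variable {E : Type*} [NormedAddCommGroup E] [NormedSpace ℝ E]

theorem exists_apply_lt_of_mem_interior_closedConvexHull {C : Set E} {p : E}
    (hp : p ∈ interior (closedConvexHull ℝ C)) {φ : E →L[ℝ] ℝ} (hφ : φ ≠ 0) :
    ∃ s ∈ C, φ s < φ p := by
  by_contra! hcon
  have hsub : closedConvexHull ℝ C ⊆ {x | φ p ≤ φ x} :=
    closedConvexHull_min hcon (convex_halfSpace_ge φ.isLinear _)
      (isClosed_le continuous_const φ.continuous)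
  have hmin : IsLocalMin φ p := mem_of_superset (mem_interior_iff_mem_nhds.1 hp) hsub
  exact hφ (hmin.hasFDerivAt_eq_zero φ.hasFDerivAt)

theorem interior_convexHull_nonempty_of_not_collinear (hdim : Module.finrank ℝ E = 2) {C : Set E}
    (hC : ¬ Collinear ℝ C) : (interior (convexHull ℝ C)).Nonempty := by
  have : FiniteDimensional ℝ E := .of_finrank_eq_succ hdim
  have hne : C.Nonempty := nonempty_iff_ne_empty.2 fun h ↦ hC (h ▸ collinear_empty ℝ E)
  rw [interior_convexHull_nonempty_iff_affineSpan_eq_top,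
    AffineSubspace.affineSpan_eq_top_iff_vectorSpan_eq_top_of_nonempty _ _ _ hne]
  rw [collinear_iff_finrank_le_one, not_le] at hC
  exact Submodule.eq_top_of_finrank_eq (le_antisymm (Submodule.finrank_le _) (hdim ▸ hC))

end ConvexHull

namespace IsChordSaturated

variable {X Y : Type*} [AddCommGroup X] [Module ℝ X] [AddCommGroup Y] [Module ℝ Y] {C : Set X}

theorem segment_subset_of_sameRay_neg (hC : IsChordSaturated C)
    {p x y : X} (hx : x ∈ C) (hp : p ∈ C) (hy : y ∈ C) (hxp : x ≠ p) (hyp : y ≠ p)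
    (hray : SameRay ℝ (y - p) (-(x - p))) : segment ℝ p x ⊆ C := by
  rw [neg_sub] at hray
  have hbtw : Wbtw ℝ x p y := wbtw_iff_sameRay_vsub.2 hray.symm
  exact ((convex_segment x y).segment_subset hbtw.mem_segment (left_mem_segment ℝ x y)).trans
    (hC hx hp hy ⟨hbtw, hxp.symm, hyp.symm⟩)

theorem image (hC : IsChordSaturated C) {f : X →ᵃ[ℝ] Y} (hf : Function.Injective f) :
    IsChordSaturated (f '' C) := by
  rintro _ ⟨x, hx, rfl⟩ _ ⟨y, hy, rfl⟩ _ ⟨z, hz, rfl⟩ h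
  rw [← image_segment]
  exact image_mono (hC hx hy hz (hf.sbtw_map_iff.1 h))

end IsChordSaturated

section StrictConvex

variable {X Y : Type*} [NormedAddCommGroup X] [NormedSpace ℝ X]
  [NormedAddCommGroup Y] [NormedSpace ℝ Y]

theorem isChordSaturated_iff_norm [StrictConvexSpace ℝ X] {C : Set X} :
    IsChordSaturated C ↔ ∀ x ∈ C, ∀ y ∈ C, ∀ z ∈ C, y ≠ x → y ≠ z →
      ‖x - z‖ = ‖x - y‖ + ‖y - z‖ → segment ℝ x z ⊆ C := by
  have hsbtw (x y z : X) : Sbtw ℝ x y z ↔ y ≠ x ∧ y ≠ z ∧ ‖x - z‖ = ‖x - y‖ + ‖y - z‖ := by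
    rw [← dist_eq_norm, ← dist_eq_norm, ← dist_eq_norm, eq_comm (a := dist x z),
      dist_add_dist_eq_iff, Sbtw, and_rotate]
  simp only [IsChordSaturated, hsbtw, and_imp]

theorem IsChordSaturated.of_surjOn_of_dist_eq [StrictConvexSpace ℝ X] [StrictConvexSpace ℝ Y]
    {CX : Set X} {CY : Set Y} {τ : X → Y} (hCX : IsChordSaturated CX) (hmaps : MapsTo τ CX CY)
    (hsurj : SurjOn τ CX CY) (hτ : ∀ u ∈ CX, ∀ v ∈ CX, dist (τ u) (τ v) = dist u v) :
    IsChordSaturated CY := by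
  rintro _ hx' _ hy' _ hz' hbtw
  obtain ⟨x, hx, rfl⟩ := hsurj hx'
  obtain ⟨y, hy, rfl⟩ := hsurj hy'
  obtain ⟨z, hz, rfl⟩ := hsurj hz'
  have hxyz : Sbtw ℝ x y z := by
    refine ⟨?_, ne_of_apply_ne τ hbtw.2.1, ne_of_apply_ne τ hbtw.2.2⟩
    rw [← dist_add_dist_eq_iff, ← hτ x hx y hy, ← hτ y hy z hz, ← hτ x hx z hz]
    exact hbtw.wbtw.dist_add_dist
  have hchord := hCX hx hy hz hxyz
  rw [segment_eq_image_lineMap] at hchord ⊢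
  rintro _ ⟨t, ht, rfl⟩
  have hw := hchord ⟨t, ht, rfl⟩
  have hτw : τ (AffineMap.lineMap x z t) = AffineMap.lineMap (τ x) (τ z) t := by
    apply eq_lineMap_of_dist_eq_mul_of_dist_eq_mul
    · rw [hτ x hx _ hw, hτ x hx z hz, dist_left_lineMap, Real.norm_of_nonneg ht.1]
    · rw [hτ _ hw z hz, hτ x hx z hz, dist_lineMap_right, Real.norm_of_nonneg (sub_nonneg.2 ht.2)]
  exact hτw ▸ hmaps hw

end StrictConvex

section EnclosesConvex

variable {X Y : Type*} [NormedAddCommGroup X] [NormedSpace ℝ X]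
  [NormedAddCommGroup Y] [NormedSpace ℝ Y]

theorem EnclosesConvex.isChordSaturated {C : Set X} (hC : EnclosesConvex C) :
    IsChordSaturated C := by
  obtain ⟨K, -, hK, -, rfl⟩ := hC
  exact isChordSaturated_frontier_of_convex hK

theorem EnclosesConvex.image {C : Set X} (hC : EnclosesConvex C) (e : X ≃L[ℝ] Y) :
    EnclosesConvex (e '' C) := by
  obtain ⟨K, hcomp, hconv, hint, rfl⟩ := hC
  refine ⟨e '' K, hcomp.image e.continuous, hconv.linear_image e.toLinearMap, ?_,
    e.toHomeomorph.image_frontier K⟩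
  exact (hint.image e).mono (e.toHomeomorph.image_interior K).subset

end EnclosesConvex

section Planar

open Complex
open scoped Real

theorem sameRay_neg_of_arg_eq_add_pi {z w : ℂ} (h : z.arg = w.arg + π) : SameRay ℝ z (-w) := by
  rcases eq_or_ne w 0 with rfl | hw
  · simp
  refine sameRay_of_arg_eq (arg_coe_angle_eq_iff.1 ?_)
  rw [arg_neg_coe_angle hw, h, Real.Angle.coe_add]

theorem div_mem_slitPlane_iff_not_sameRay_neg {z w : ℂ} :
    z / w ∈ slitPlane ↔ ¬ SameRay ℝ z (-w) := by
  rw [sameRay_iff_arg_div_eq_zero, div_neg, arg_eq_zero_iff, mem_slitPlane_iff, not_and_or, neg_re,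
    neg_im, neg_nonneg, not_le, neg_eq_zero]

theorem sameRay_div_iff {z w c : ℂ} (hc : c ≠ 0) :
    SameRay ℝ (z / c) (w / c) ↔ SameRay ℝ z w := by
  rw [sameRay_iff_arg_div_eq_zero, div_div_div_cancel_right₀ hc, ← sameRay_iff_arg_div_eq_zero]

theorem exists_arg_add_pi_lt_arg {S : Set ℂ} (hS : ∀ w ≠ 0, ∃ s ∈ S, (s * w).re < 0) :
    ∃ s ∈ S, ∃ t ∈ S, s.arg + π < t.arg := by
  obtain ⟨s₀, hs₀, -⟩ := hS 1 one_ne_zero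
  by_contra! hcon
  obtain ⟨m, hm_ge, hm_le⟩ := exists_between_of_forall_le
    (s := (fun z ↦ z.arg - π / 2) '' S) (t := (fun z ↦ z.arg + π / 2) '' S)
    ⟨_, mem_image_of_mem _ hs₀⟩ ⟨_, mem_image_of_mem _ hs₀⟩ (by
      rintro _ ⟨t, ht, rfl⟩ _ ⟨s, hs, rfl⟩
      linarith [hcon s hs t ht])
  obtain ⟨s, hs, hneg⟩ := hS (exp (-m * I)) (exp_ne_zero _)
  have hre : (s * exp (-m * I)).re = ‖s‖ * Real.cos (s.arg - m) := by
    rw [← norm_mul_exp_arg_mul_I s, mul_assoc, ← exp_add, ← add_mul, ← sub_eq_add_neg,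
      ← ofReal_sub, re_ofReal_mul, exp_ofReal_mul_I_re, norm_mul_exp_arg_mul_I]
  have hcos : 0 ≤ Real.cos (s.arg - m) := Real.cos_nonneg_of_mem_Icc
    ⟨by linarith [hm_le (mem_image_of_mem _ hs)], by linarith [hm_ge (mem_image_of_mem _ hs)]⟩
  exact hneg.not_ge (hre ▸ mul_nonneg (norm_nonneg s) hcos)

theorem exists_two_opposite_ray_pairs_of_subset_slitPlane {S : Set ℂ} (hconn : IsPreconnected S)
    (hslit : S ⊆ slitPlane) (hS : ∀ w ≠ 0, ∃ s ∈ S, (s * w).re < 0) :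
    ∃ a ∈ S, ∃ a' ∈ S, ∃ b ∈ S, ∃ b' ∈ S, SameRay ℝ a' (-a) ∧ SameRay ℝ b' (-b) ∧
      ¬ SameRay ℝ a b ∧ ¬ SameRay ℝ a' b := by
  have hord : (arg '' S).OrdConnected := (hconn.image arg fun z hz ↦
    (continuousAt_arg (hslit hz)).continuousWithinAt).ordConnected
  obtain ⟨a, ha, b', hb', hab'⟩ := exists_arg_add_pi_lt_arg hS
  have hIcc {θ : ℝ} (h₁ : a.arg ≤ θ) (h₂ : θ ≤ b'.arg) : ∃ z ∈ S, z.arg = θ :=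
    hord.out (mem_image_of_mem _ ha) (mem_image_of_mem _ hb') ⟨h₁, h₂⟩
  obtain ⟨a', ha', haa'⟩ := hIcc (θ := a.arg + π) (by linarith [Real.pi_pos]) hab'.le
  obtain ⟨b, hb, hbb'⟩ := hIcc (θ := b'.arg - π) (by linarith) (by linarith [Real.pi_pos])
  have hray {z w : ℂ} (hz : z ∈ S) (hw : w ∈ S) (h : z.arg ≠ w.arg) : ¬ SameRay ℝ z w := by
    simp [sameRay_iff, slitPlane_ne_zero (hslit hz), slitPlane_ne_zero (hslit hw), h]
  exact ⟨a, ha, a', ha', b, hb, b', hb', sameRay_neg_of_arg_eq_add_pi haa',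
    sameRay_neg_of_arg_eq_add_pi (by linarith), hray ha hb (by linarith),
    hray ha' hb (by linarith [neg_pi_lt_arg a, arg_le_pi b'])⟩

theorem exists_two_opposite_ray_pairs {S : Set ℂ} (hconn : IsPreconnected S) (h0 : 0 ∉ S)
    (hS : ∀ w ≠ 0, ∃ s ∈ S, (s * w).re < 0) :
    ∃ a ∈ S, ∃ a' ∈ S, ∃ b ∈ S, ∃ b' ∈ S, SameRay ℝ a' (-a) ∧ SameRay ℝ b' (-b) ∧
      ¬ SameRay ℝ a b ∧ ¬ SameRay ℝ a' b := by
  by_cases hopp : ∀ s ∈ S, ∃ s' ∈ S, SameRay ℝ s' (-s)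
  · obtain ⟨a, ha, -⟩ := hS 1 one_ne_zero
    have ha0 : a ≠ 0 := ne_of_mem_of_not_mem ha h0
    obtain ⟨b, hb, hneg⟩ := hS (-I / a) (div_ne_zero (neg_ne_zero.2 I_ne_zero) ha0)
    obtain ⟨a', ha', haa'⟩ := hopp a ha
    obtain ⟨b', hb', hbb'⟩ := hopp b hb
    have him : (b / a).im ≠ 0 := by
      rw [mul_div_left_comm] at hneg
      exact ne_of_lt (by simpa using hneg)
    have hb_neg : ¬ SameRay ℝ b (-a) := div_mem_slitPlane_iff_not_sameRay_neg.1 (.inr him)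
    have hb_pos : ¬ SameRay ℝ a b := fun h ↦
      him (arg_eq_zero_iff.1 (sameRay_iff_arg_div_eq_zero.1 h.symm)).2
    exact ⟨a, ha, a', ha', b, hb, b', hb', haa', hbb', hb_pos,
      fun h ↦ hb_neg (h.symm.trans haa' fun h' ↦ (ne_of_mem_of_not_mem ha' h0 h').elim)⟩
  push Not at hopp
  -- Rotating a direction `c` without opposite onto `1` moves `S` off the branch cut of `arg`.
  obtain ⟨c, hc, hc_opp⟩ := hopp
  have hc0 : c ≠ 0 := ne_of_mem_of_not_mem hc h0
  obtain ⟨_, ⟨a, ha, rfl⟩, _, ⟨a', ha', rfl⟩, _, ⟨b, hb, rfl⟩, _, ⟨b', hb', rfl⟩, h⟩ :=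
    exists_two_opposite_ray_pairs_of_subset_slitPlane (S := (· / c) '' S)
      (hconn.image _ (by fun_prop))
      (image_subset_iff.2 fun s hs ↦ div_mem_slitPlane_iff_not_sameRay_neg.2 (hc_opp s hs))
      (fun w hw ↦ by
        obtain ⟨s, hs, hneg⟩ := hS (w / c) (div_ne_zero hw hc0)
        exact ⟨_, mem_image_of_mem _ hs, by rwa [div_mul_comm, mul_comm]⟩)
  simp only [← neg_div, sameRay_div_iff hc0] at h
  exact ⟨a, ha, a', ha', b, hb, b', hb', h⟩

theorem exists_continuousOn_injOn_frontier_diff_singleton {K : Set ℂ} (hK : Convex ℝ K)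
    (hint : (interior K).Nonempty) {q : ℂ} (hq : q ∈ frontier K) :
    ∃ g : ℂ → ℝ, ContinuousOn g (frontier K \ {q}) ∧ InjOn g (frontier K \ {q}) := by
  obtain ⟨c, hc⟩ := hint
  have hcq : c - q ≠ 0 := sub_ne_zero.2 fun h ↦ hq.2 (h ▸ hc)
  have hslit : ∀ x ∈ frontier K \ {q}, (x - c) / (c - q) ∈ slitPlane := fun x hx ↦ by
    rw [div_mem_slitPlane_iff_not_sameRay_neg, neg_sub]
    exact fun h ↦ hx.2 (eq_of_mem_frontier_of_sameRay hK hc hx.1 hq h)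
  refine ⟨fun x ↦ ((x - c) / (c - q)).arg, fun x hx ↦ ?_, fun x hx y hy hxy ↦ ?_⟩
  · exact ((continuousAt_arg (hslit x hx)).comp (f := fun x ↦ (x - c) / (c - q))
      (by fun_prop)).continuousWithinAt
  · exact eq_of_mem_frontier_of_sameRay hK hc hx.1 hy.1
      ((sameRay_div_iff hcq).1 (sameRay_of_arg_eq hxy))

namespace IsJordanCurve

theorem eq_frontier_of_subset {C K : Set ℂ} (hC : IsJordanCurve C) (hK : Convex ℝ K)
    (hint : (interior K).Nonempty) (hsub : C ⊆ frontier K) : C = frontier K := by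
  refine hsub.antisymm fun q hq ↦ by_contra fun hqC ↦ ?_
  have hsub' : C ⊆ frontier K \ {q} := subset_sdiff_singleton hsub hqC
  obtain ⟨g, hg, hinj⟩ := exists_continuousOn_injOn_frontier_diff_singleton hK hint hq
  exact hC.not_injOn (hg.mono hsub') (hinj.mono hsub')

theorem notMem_interior_closedConvexHull {C : Set ℂ} (hC : IsJordanCurve C)
    (hchord : IsChordSaturated C) {p : ℂ} (hp : p ∈ C) : p ∉ interior (closedConvexHull ℝ C) := by
  intro hpi
  have hhalf : ∀ w ≠ 0, ∃ s ∈ (· - p) '' (C \ {p}), (s * w).re < 0 := fun w hw ↦ by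
    let φ : ℂ →L[ℝ] ℝ := reCLM.comp (ContinuousLinearMap.mul ℝ ℂ w)
    have hφ : φ ≠ 0 := fun h ↦ by simpa [φ, hw] using DFunLike.congr_fun h w⁻¹
    obtain ⟨x, hx, hlt⟩ := exists_apply_lt_of_mem_interior_closedConvexHull hpi hφ
    refine ⟨_, mem_image_of_mem _ ⟨hx, ?_⟩, ?_⟩
    · rintro rfl
      exact hlt.false
    · simpa [φ, mul_comm, mul_sub] using hlt
  obtain ⟨_, ⟨a, ha, rfl⟩, _, ⟨a', ha', rfl⟩, _, ⟨b, hb, rfl⟩, _, ⟨b', hb', rfl⟩, haa', hbb', hab,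
    hab'⟩ := exists_two_opposite_ray_pairs
      ((hC.isPreconnected_diff_singleton hp).image (· - p) (by fun_prop))
      (by rintro ⟨x, hx, hxp⟩; exact hx.2 (sub_eq_zero.1 hxp)) hhalf
  have hseg {x y : ℂ} (hx : x ∈ C \ {p}) (hy : y ∈ C \ {p}) (hxy : SameRay ℝ (y - p) (-(x - p))) :
      segment ℝ p x ⊆ C :=
    hchord.segment_subset_of_sameRay_neg hx.1 hp hy.1 hx.2 hy.2 hxy
  have haa'_symm : SameRay ℝ (a - p) (-(a' - p)) := sameRay_neg_swap.1 haa'.symm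
  rcases hC.exists_sameRay_of_segments_subset (hseg ha ha' haa') (hseg ha' ha haa'_symm)
    (hseg hb hb' hbb') with h | h | h
  · have ha_neg : SameRay ℝ (a - p) (-(a - p)) :=
      h.trans haa' fun h0 ↦ (ha'.2 (sub_eq_zero.1 h0)).elim
    exact ha.2 (sub_eq_zero.1 (eq_zero_of_sameRay_self_neg ha_neg))
  · exact hab h
  · exact hab' h

theorem enclosesConvex_complex {C : Set ℂ} (hC : IsJordanCurve C) (hchord : IsChordSaturated C) :
    EnclosesConvex C := by
  have hint : (interior (closedConvexHull ℝ C)).Nonempty :=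
    (interior_convexHull_nonempty_of_not_collinear finrank_real_complex hC.not_collinear).mono
      (interior_mono convexHull_subset_closedConvexHull)
  have hcomp : IsCompact (closedConvexHull ℝ C) := by
    rw [closedConvexHull_eq_closure_convexHull]
    exact (isBounded_convexHull.2 hC.isCompact.isBounded).isCompact_closure
  exact ⟨_, hcomp, convex_closedConvexHull, hint,
    hC.eq_frontier_of_subset convex_closedConvexHull hint fun p hp ↦
      ⟨subset_closure (subset_closedConvexHull hp), hC.notMem_interior_closedConvexHull hchord hp⟩⟩

end IsJordanCurve

end Planar

theorem IsJordanCurve.enclosesConvex_iff_isChordSaturated {X : Type*} [NormedAddCommGroup X]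
    [NormedSpace ℝ X] (hdim : Module.finrank ℝ X = 2) {C : Set X} (hC : IsJordanCurve C) :
    EnclosesConvex C ↔ IsChordSaturated C := by
  refine ⟨EnclosesConvex.isChordSaturated, fun hchord ↦ ?_⟩
  have : FiniteDimensional ℝ X := .of_finrank_eq_succ hdim
  let e : X ≃L[ℝ] ℂ := .ofFinrankEq (hdim.trans Complex.finrank_real_complex.symm)
  have hCe : IsJordanCurve (e '' C) := hC.image e.continuous e.injective
  have hchord_e : IsChordSaturated (e '' C) := hchord.image (f := e.toAffineMap) e.injective
  simpa only [e.symm_image_image] using (hCe.enclosesConvex_complex hchord_e).image e.symm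

/-- Let `X` be a strictly convex normed plane. A Jordan curve
`C ⊆ X` encloses a convex region iff for all `z¹, z², z³ ∈ C` with `z²` strictly
metrically between `z¹` and `z³` (i.e. `‖z¹-z³‖ = ‖z¹-z²‖ + ‖z²-z³‖`, `z² ≠ z¹, z³`),
the segment `[z¹, z³]` is contained in `C`. Consequently, if `C_X` encloses a convex
region and `τ : C_X → C_Y` is a surjective isometry onto a Jordan curve `C_Y` in a
strictly convex normed plane `Y`, then `C_Y` also encloses a convex region. -/
theorem stmt11 {X Y : Type*} [NormedAddCommGroup X] [NormedSpace ℝ X]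
    [NormedAddCommGroup Y] [NormedSpace ℝ Y]
    [StrictConvexSpace ℝ X] [StrictConvexSpace ℝ Y]
    (hdimX : Module.finrank ℝ X = 2) (hdimY : Module.finrank ℝ Y = 2) :
    (∀ C : Set X, IsJordanCurve C →
      (EnclosesConvex C ↔
        ∀ z1 ∈ C, ∀ z2 ∈ C, ∀ z3 ∈ C, z2 ≠ z1 → z2 ≠ z3 →
          ‖z1 - z3‖ = ‖z1 - z2‖ + ‖z2 - z3‖ → segment ℝ z1 z3 ⊆ C)) ∧
    (∀ (CX : Set X) (CY : Set Y) (τ : X → Y),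
      IsJordanCurve CX → EnclosesConvex CX → IsJordanCurve CY →
      Set.MapsTo τ CX CY → Set.SurjOn τ CX CY →
      (∀ u ∈ CX, ∀ v ∈ CX, ‖τ u - τ v‖ = ‖u - v‖) →
      EnclosesConvex CY) := by
  have hiff (C : Set X) (hC : IsJordanCurve C) := hC.enclosesConvex_iff_isChordSaturated hdimX
  refine ⟨fun C hC ↦ (hiff C hC).trans isChordSaturated_iff_norm,
    fun CX CY τ _ hCX hCY hmaps hsurj hτ ↦ ?_⟩
  rw [hCY.enclosesConvex_iff_isChordSaturated hdimY]
  refine hCX.isChordSaturated.of_surjOn_of_dist_eq hmaps hsurj ?_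
  simpa only [dist_eq_norm] using hτ
end

section
/- Let X, Y be strictly convex normed planes such that the sets of non-differentiability points of their norms on the unit spheres are finite with more than three elements each. Let C_X ⊂ X be a piecewise C¹ Jordan curve enclosing a convex region, and let τ : C_X → C_Y be a surjective isometry onto a piecewise C¹ curve C_Y ⊂ Y. Then τ is affine; in particular X and Y are linearly isometric. -/
/-- `γ` is a natural (arc-length) parameterization of the closed curve `C`, with period
`L`, which is piecewise `C¹`: it has one-sided derivatives of norm one everywhere and is
differentiable except at the points of a finite set `F ⊆ C`. -/
def IsPiecewiseC1NaturalParam {X : Type*} [NormedAddCommGroup X] [NormedSpace ℝ X]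
    (C : Set X) (γ : ℝ → X) (L : ℝ) (F : Set X) : Prop :=
  0 < L ∧ Function.Periodic γ L ∧ Set.range γ = C ∧ Set.InjOn γ (Set.Ico 0 L) ∧
    F.Finite ∧ F ⊆ C ∧
    (∀ t : ℝ, ∃ dp dm : X, ‖dp‖ = 1 ∧ ‖dm‖ = 1 ∧
      HasDerivWithinAt γ dp (Set.Ici t) t ∧ HasDerivWithinAt γ dm (Set.Iic t) t) ∧
    (∀ t : ℝ, γ t ∉ F → DifferentiableAt ℝ γ t)

/-- A piecewise `C¹` Jordan curve. -/
def IsPiecewiseC1JordanCurve {X : Type*} [NormedAddCommGroup X] [NormedSpace ℝ X]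
    (C : Set X) : Prop :=
  ∃ (γ : ℝ → X) (L : ℝ) (F : Set X), IsPiecewiseC1NaturalParam C γ L F

/-!
At a corner of the unit sphere of a plane, the norm is to first order the maximum `max f g` of two
functionals, which form a coordinate system. Consider the chords of the convex body in the direction
of such a corner, parametrized by the height `f - g`. Wherever the end points and their images
depend differentiably on the height, the distance from one end point to the others has a kink, so
the norm of `Y` must have a corner in the direction of the image chord. A plane norm has only
countably many corners and the direction of the image chord is locally Lipschitz, hence constant.
Comparing the two first-order expansions, and using that strict convexity makes `τ` monotone in the
height, one finds that `τ` preserves increments of both coordinates. So `τ` is affine on the end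
points of the chords, and these determine it on the whole frontier.
-/

section

open Set Filter Topology Asymptotics

section MaxFDeriv

theorem isLittleO_max_sub_max {α E : Type*} [SeminormedAddCommGroup E] {l : Filter α}
    {f₁ f₂ g₁ g₂ : α → ℝ} {k : α → E} (h₁ : (fun x ↦ f₁ x - g₁ x) =o[l] k)
    (h₂ : (fun x ↦ f₂ x - g₂ x) =o[l] k) :
    (fun x ↦ max (f₁ x) (f₂ x) - max (g₁ x) (g₂ x)) =o[l] k :=
  (isBigO_of_le (g := fun x ↦ (f₁ x - g₁ x, f₂ x - g₂ x)) l fun _ ↦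
    abs_max_sub_max_le_max _ _ _ _).trans_isLittleO (h₁.prod_left h₂)

variable {X Y : Type*} [NormedAddCommGroup X] [NormedSpace ℝ X] [NormedAddCommGroup Y]

/-- `N` has the two-piece derivative `max f g` at `x`: its first order expansion at `x` is the
maximum of two continuous linear functionals. This describes the corners of convex functions
which are smooth along a line, such as a norm on a plane. -/
def HasMaxFDerivAt (N : X → ℝ) (f g : X →L[ℝ] ℝ) (x : X) : Prop :=
  (fun z ↦ N z - N x - max (f (z - x)) (g (z - x))) =o[𝓝 x] fun z ↦ z - x

namespace HasMaxFDerivAt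

variable {N : X → ℝ} {f g : X →L[ℝ] ℝ} {x : X}

theorem symm (h : HasMaxFDerivAt N f g x) : HasMaxFDerivAt N g f x := by
  simpa only [HasMaxFDerivAt, max_comm] using h

theorem congr_of_eventuallyEq {N' : X → ℝ} (h : HasMaxFDerivAt N f g x) (hN : N' =ᶠ[𝓝 x] N) :
    HasMaxFDerivAt N' f g x := by
  refine IsLittleO.congr' h ?_ EventuallyEq.rfl
  filter_upwards [hN] with z hz
  rw [hz, hN.eq_of_nhds]

theorem isBigO_sub (h : HasMaxFDerivAt N f g x) : (fun z ↦ N z - N x) =O[𝓝 x] fun z ↦ z - x := by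
  have hmax : (fun z ↦ max (f (z - x)) (g (z - x))) =O[𝓝 x] fun z ↦ z - x :=
    (isBigO_of_le (g := fun z ↦ (f (z - x), g (z - x))) _ fun _ ↦
      abs_max_le_max_abs_abs).trans ((f.isBigO_sub _ x).prod_left (g.isBigO_sub _ x))
  exact (h.isBigO.add hmax).congr_left fun z ↦ by ring

theorem isLittleO_comp (h : HasMaxFDerivAt N f g x) {c : Y → X} {y : Y} (hc : c y = x)
    (hcO : (fun z ↦ c z - c y) =O[𝓝 y] fun z ↦ z - y) :
    (fun z ↦ N (c z) - N (c y) - max (f (c z - c y)) (g (c z - c y))) =o[𝓝 y]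
      fun z ↦ z - y := by
  subst hc
  have hlim : Tendsto c (𝓝 y) (𝓝 (c y)) := tendsto_sub_nhds_zero_iff.1
    (hcO.trans_tendsto (tendsto_sub_nhds_zero_iff.2 tendsto_id))
  exact (IsLittleO.comp_tendsto h hlim).trans_isBigO hcO

theorem comp [NormedSpace ℝ Y] (h : HasMaxFDerivAt N f g x) {c : Y → X} {c' : Y →L[ℝ] X} {y : Y}
    (hxy : c y = x) (hc : HasFDerivAt c c' y) :
    HasMaxFDerivAt (N ∘ c) (f ∘L c') (g ∘L c') y := by
  have hlin : ∀ ℓ : X →L[ℝ] ℝ, (fun z ↦ ℓ (c z - c y) - ℓ (c' (z - y))) =o[𝓝 y]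
      fun z ↦ z - y := fun ℓ ↦
    ((ℓ.isBigO_comp _ _).trans_isLittleO hc.isLittleO).congr_left fun z ↦ map_sub ℓ _ _
  refine ((h.isLittleO_comp hxy hc.isBigO_sub).add
    (isLittleO_max_sub_max (hlin f) (hlin g))).congr_left fun z ↦ ?_
  simp only [Function.comp_apply, ContinuousLinearMap.comp_apply]
  ring

theorem mul (h : HasMaxFDerivAt N f g x) {φ : X → ℝ} {φ' : X →L[ℝ] ℝ}
    (hφ : HasFDerivAt φ φ' x) (hpos : 0 ≤ φ x) :
    HasMaxFDerivAt (fun z ↦ φ z * N z) (φ x • f + N x • φ') (φ x • g + N x • φ') x := by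
  have hN : Tendsto (fun z ↦ N z - N x) (𝓝 x) (𝓝 0) :=
    h.isBigO_sub.trans_tendsto (tendsto_sub_nhds_zero_iff.2 tendsto_id)
  have hprod : (fun z ↦ (φ z - φ x) * (N z - N x)) =o[𝓝 x] fun z ↦ z - x := by
    simpa using (hφ.isBigO_sub.norm_right.mul_isLittleO ((isLittleO_one_iff ℝ).2 hN)).norm_right
  refine ((hprod.add (IsLittleO.const_mul_left h (φ x))).add
    (hφ.isLittleO.const_mul_left (N x))).congr_left fun z ↦ ?_
  simp only [add_apply, smul_apply, smul_eq_mul,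
    max_add_add_right, ← mul_max_of_nonneg _ _ hpos]
  ring

theorem fderiv_eq (h : HasMaxFDerivAt N f g x) (hd : DifferentiableAt ℝ N x) :
    fderiv ℝ N x = f := by
  have hmax : HasFDerivAt (fun z ↦ max (f (z - x)) (g (z - x)) - f (z - x)) (fderiv ℝ N x - f) x :=
    .of_isLittleO <| (hd.hasFDerivAt.isLittleO.sub h).congr_left fun z ↦ by simp
  have hmin : IsLocalMin (fun z ↦ max (f (z - x)) (g (z - x)) - f (z - x)) x :=
    .of_forall fun z ↦ by simp
  exact sub_eq_zero.1 (hmin.hasFDerivAt_eq_zero hmax)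

theorem differentiableAt_iff (h : HasMaxFDerivAt N f g x) : DifferentiableAt ℝ N x ↔ f = g := by
  constructor
  · exact fun hd ↦ (h.fderiv_eq hd).symm.trans (h.symm.fderiv_eq hd)
  · rintro rfl
    refine HasFDerivAt.differentiableAt (f' := f) (.of_isLittleO ?_)
    simpa only [HasMaxFDerivAt, max_self] using h

end HasMaxFDerivAt

end MaxFDeriv

section NormOnPlane

theorem hasMaxFDerivAt_of_convexOn {G : ℝ → ℝ} (hG : ConvexOn ℝ univ G) (x : ℝ) :
    HasMaxFDerivAt G (.toSpanSingleton ℝ (derivWithin G (Ioi x) x))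
      (.toSpanSingleton ℝ (derivWithin G (Iio x) x)) x := by
  have hx : x ∈ interior univ := by simp
  have hr := hG.hasDerivWithinAt_rightDeriv_of_mem_interior hx
  have hl := hG.hasDerivWithinAt_leftDeriv_of_mem_interior hx
  have hle := hG.leftDeriv_le_rightDeriv_of_mem_interior hx
  rw [hasDerivWithinAt_iff_isLittleO] at hr hl
  rw [HasMaxFDerivAt, ← nhdsLT_sup_nhdsGE, ← nhdsGT_sup_nhdsWithin_singleton]
  refine isLittleO_sup.2 ⟨hl.congr' ?_ .rfl, isLittleO_sup.2 ⟨hr.congr' ?_ .rfl, ?_⟩⟩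
  · filter_upwards [self_mem_nhdsWithin] with z hz
    simp only [ContinuousLinearMap.toSpanSingleton_apply, smul_eq_mul]
    rw [max_eq_right (mul_le_mul_of_nonpos_left hle (sub_nonpos.2 (mem_Iio.1 hz).le))]
  · filter_upwards [self_mem_nhdsWithin] with z hz
    simp only [ContinuousLinearMap.toSpanSingleton_apply, smul_eq_mul]
    rw [max_eq_left (mul_le_mul_of_nonneg_left hle (sub_nonneg.2 (mem_Ioi.1 hz).le))]
  · simp [nhdsWithin_singleton]

theorem countable_not_differentiableAt_of_convexOn {G : ℝ → ℝ} (hG : ConvexOn ℝ univ G) :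
    {x | ¬ DifferentiableAt ℝ G x}.Countable := by
  have hint : ∀ x : ℝ, x ∈ interior univ := by simp
  have hlt : ∀ x, ¬ DifferentiableAt ℝ G x →
      derivWithin G (Iio x) x < derivWithin G (Ioi x) x := fun x hx ↦ by
    refine (hG.leftDeriv_le_rightDeriv_of_mem_interior (hint x)).lt_of_ne fun heq ↦ hx ?_
    rw [(hasMaxFDerivAt_of_convexOn hG x).differentiableAt_iff, heq]
  have hmono : ∀ x y, x < y → derivWithin G (Ioi x) x ≤ derivWithin G (Iio y) y :=
    fun x y hxy ↦ (hG.rightDeriv_le_slope_of_mem_interior (hint x) (mem_univ y) hxy).trans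
      (hG.slope_le_leftDeriv_of_mem_interior (mem_univ x) (hint y) hxy)
  refine Set.PairwiseDisjoint.countable_of_isOpen
    (s := fun x ↦ Ioo (derivWithin G (Iio x) x) (derivWithin G (Ioi x) x)) ?_
    (fun x _ ↦ isOpen_Ioo) fun x hx ↦ nonempty_Ioo.2 (hlt x hx)
  intro x _ y _ hxy
  refine Set.disjoint_left.2 fun s hsx hsy ↦ ?_
  rcases hxy.lt_or_gt with h | h
  · exact ((hsx.2.trans_le (hmono x y h)).trans hsy.1).false
  · exact ((hsy.2.trans_le (hmono y x h)).trans hsx.1).false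

variable {X : Type*} [NormedAddCommGroup X] [NormedSpace ℝ X]

theorem exists_continuousLinearEquiv_prod (hX : Module.finrank ℝ X = 2) {u : X} (hu : u ≠ 0) :
    ∃ e : X ≃L[ℝ] ℝ × ℝ, e u = (1, 0) := by
  have : FiniteDimensional ℝ X := Module.finite_of_finrank_pos (hX ▸ two_pos)
  let e₀ : X ≃L[ℝ] ℝ × ℝ := .ofFinrankEq (by simp [hX])
  obtain ⟨A, hA⟩ := SeparatingDual.exists_continuousLinearEquiv_apply_eq (R := ℝ)
    (e₀.map_eq_zero_iff.not.2 hu) (show ((1, 0) : ℝ × ℝ) ≠ 0 by simp)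
  exact ⟨e₀.trans A, hA⟩

theorem convexOn_norm_add_smul (u v : X) : ConvexOn ℝ univ fun s : ℝ ↦ ‖u + s • v‖ := by
  simpa [Function.comp_def, AffineMap.lineMap_apply_module', add_comm] using
    convexOn_univ_norm.comp_affineMap (AffineMap.lineMap (k := ℝ) u (u + v))

theorem fst_smul_add_smul {u : X} {e : X ≃L[ℝ] ℝ × ℝ} (he : e u = (1, 0)) {z : X}
    (hz : (e z).1 ≠ 0) :
    (e z).1 • (u + ((e z).2 / (e z).1) • e.symm (0, 1)) = z := by
  apply e.injective
  ext <;> simp [he, mul_div_cancel₀ _ hz]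

theorem abs_mul_norm_add_smul {u : X} {e : X ≃L[ℝ] ℝ × ℝ} (he : e u = (1, 0)) {z : X}
    (hz : (e z).1 ≠ 0) :
    |(e z).1| * ‖u + ((e z).2 / (e z).1) • e.symm (0, 1)‖ = ‖z‖ := by
  rw [← Real.norm_eq_abs, ← norm_smul, fst_smul_add_smul he hz]

theorem differentiableAt_norm_of_slice {u : X} {e : X ≃L[ℝ] ℝ × ℝ} (he : e u = (1, 0)) {z : X}
    (hz : (e z).1 ≠ 0)
    (hd : DifferentiableAt ℝ (fun s : ℝ ↦ ‖u + s • e.symm (0, 1)‖) ((e z).2 / (e z).1)) :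
    DifferentiableAt ℝ (fun z : X ↦ ‖z‖) z := by
  have hfst : DifferentiableAt ℝ (fun z ↦ (e z).1) z := by fun_prop
  have hratio : DifferentiableAt ℝ (fun z ↦ (e z).2 / (e z).1) z := by fun_prop (disch := exact hz)
  refine ((hfst.abs hz).mul (hd.comp z hratio)).congr_of_eventuallyEq ?_
  filter_upwards [hfst.continuousAt.eventually_ne hz] with z' hz'
  exact (abs_mul_norm_add_smul he hz').symm

theorem hasMaxFDerivAt_norm_smul {f g : X →L[ℝ] ℝ} {u : X}
    (h : HasMaxFDerivAt (‖·‖) f g u) {t : ℝ} (ht : 0 < t) :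
    HasMaxFDerivAt (‖·‖) f g (t • u) := by
  have hscale : HasFDerivAt (fun z : X ↦ t⁻¹ • z) (t⁻¹ • ContinuousLinearMap.id ℝ X) (t • u) :=
    (hasFDerivAt_id _).const_smul _
  have := (h.comp (by rw [smul_smul, inv_mul_cancel₀ ht.ne', one_smul]) hscale).mul
    (hasFDerivAt_const t _) ht.le
  convert this using 1
  · ext z
    simp [norm_smul, abs_of_pos ht, ht.ne']
  all_goals
    ext z
    simp [ht.ne']

theorem exists_hasMaxFDerivAt_norm (hX : Module.finrank ℝ X = 2) {u : X} (hu : u ≠ 0) :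
    ∃ f g : X →L[ℝ] ℝ, f u = ‖u‖ ∧ g u = ‖u‖ ∧ HasMaxFDerivAt (‖·‖) f g u := by
  obtain ⟨e, he⟩ := exists_continuousLinearEquiv_prod hX hu
  let φ : X →L[ℝ] ℝ := .fst ℝ ℝ ℝ ∘L e
  let ψ : X →L[ℝ] ℝ := .snd ℝ ℝ ℝ ∘L e
  have hφ : φ u = 1 := by simp [φ, he]
  have hψ : ψ u = 0 := by simp [ψ, he]
  have hratio : HasFDerivAt (fun z ↦ ψ z / φ z) ψ u := by
    have := ψ.hasFDerivAt.mul ((hasDerivAt_inv (by simp [hφ])).comp_hasFDerivAt u φ.hasFDerivAt)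
    simpa [div_eq_mul_inv, hφ, hψ, Function.comp_def, Pi.mul_def] using this
  have hslice := hasMaxFDerivAt_of_convexOn (convexOn_norm_add_smul u (e.symm (0, 1))) 0
  have h := (hslice.comp (by simp [hψ]) hratio).mul φ.hasFDerivAt (by simp [hφ])
  refine ⟨_, _, ?_, ?_, h.congr_of_eventuallyEq ?_⟩
  · simp [hφ, hψ]
  · simp [hφ, hψ]
  · filter_upwards [φ.continuous.continuousAt.eventually_const_lt (by simp [hφ] : 0 < φ u)]
      with z hz
    have hz' : 0 < (e z).1 := hz
    rw [← abs_mul_norm_add_smul he hz'.ne', abs_of_pos hz']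
    rfl

theorem exists_continuousLinearEquiv_prod_sub (hX : Module.finrank ℝ X = 2) {f g : X →L[ℝ] ℝ}
    {u : X} (hf : f u = 1) (hg : g u = 1) (hfg : f ≠ g) :
    ∃ e : X ≃L[ℝ] ℝ × ℝ, ∀ x, e x = (f x, f x - g x) := by
  have : FiniteDimensional ℝ X := Module.finite_of_finrank_pos (hX ▸ two_pos)
  obtain ⟨x₀, hx₀⟩ : ∃ x₀, f x₀ - g x₀ ≠ 0 := by
    simpa [sub_ne_zero] using DFunLike.ne_iff.1 hfg
  have hsurj : Function.Surjective (f.prod (f - g)) := by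
    rintro ⟨a, b⟩
    refine ⟨(b / (f x₀ - g x₀)) • x₀ + (a - b / (f x₀ - g x₀) * f x₀) • u, ?_⟩
    ext
    · simp [hf]
    · simp only [ContinuousLinearMap.prod_apply, map_add, map_smul, sub_apply, hf, hg,
        Prod.smul_mk, Prod.mk_add_mk, smul_eq_mul]
      linear_combination div_mul_cancel₀ b hx₀
  have hinj := (LinearMap.injective_iff_surjective_of_finrank_eq_finrank
    (f := (f.prod (f - g)).toLinearMap) (by simp [hX])).2 hsurj
  exact ⟨ContinuousLinearEquiv.ofBijective _ (LinearMap.ker_eq_bot.2 hinj)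
    (LinearMap.range_eq_top.2 hsurj), fun x ↦ rfl⟩

theorem countable_not_differentiableAt_norm (hX : Module.finrank ℝ X = 2) :
    {w : X | ‖w‖ = 1 ∧ ¬ DifferentiableAt ℝ (fun z : X ↦ ‖z‖) w}.Countable := by
  have : Nontrivial X := Module.nontrivial_of_finrank_pos (R := ℝ) (hX ▸ two_pos)
  obtain ⟨u, hu⟩ := exists_ne (0 : X)
  obtain ⟨e, he⟩ := exists_continuousLinearEquiv_prod hX hu
  set v := e.symm (0, 1)
  let B : Set ℝ := {s | ¬ DifferentiableAt ℝ (fun s : ℝ ↦ ‖u + s • v‖) s}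
  let P : Set X := insert v ((fun s ↦ u + s • v) '' B)
  have hP : P.Countable := ((countable_not_differentiableAt_of_convexOn
    (convexOn_norm_add_smul u v)).image _).insert v
  let Q : Set X := NormedSpace.normalize '' P ∪ (-NormedSpace.normalize ·) '' P
  have hQ : Q.Countable := (hP.image _).union (hP.image _)
  refine hQ.mono fun w ⟨hw, hnd⟩ ↦ ?_
  obtain ⟨t, x, hx, rfl⟩ : ∃ t : ℝ, ∃ x ∈ P, w = t • x := by
    by_cases hw₀ : (e w).1 = 0
    · exact ⟨(e w).2, v, mem_insert _ _, e.injective (by ext <;> simp [v, hw₀])⟩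
    · refine ⟨(e w).1, _, mem_insert_of_mem _ ⟨(e w).2 / (e w).1, ?_, rfl⟩, ?_⟩
      · exact fun hd ↦ hnd (differentiableAt_norm_of_slice he hw₀ hd)
      · exact (fst_smul_add_smul he hw₀).symm
  have ht : t ≠ 0 := fun ht ↦ by simp [ht] at hw
  rw [← NormedSpace.normalize_eq_self_of_norm_eq_one hw]
  rcases ht.lt_or_gt with ht | ht
  · exact .inr ⟨x, hx, (NormedSpace.normalize_smul_of_neg ht x).symm⟩
  · exact .inl ⟨x, hx, (NormedSpace.normalize_smul_of_pos ht x).symm⟩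

end NormOnPlane

section LocallyLipschitz

open MeasureTheory Measure

theorem volume_image_eq_zero_of_locallyLipschitzOn {f : ℝ → ℝ} {s : Set ℝ}
    (hf : LocallyLipschitzOn s f) (hs : volume s = 0) : volume (f '' s) = 0 := by
  have hloc : ∀ x ∈ s, ∃ t ∈ 𝓝[s] x, volume (f '' (t ∩ s)) = 0 := by
    intro x hx
    obtain ⟨C, t, ht, hLip⟩ := hf hx
    refine ⟨t, ht, ?_⟩
    have hle := (hLip.mono inter_subset_left).hausdorffMeasure_image_le (s := t ∩ s) zero_le_one
    rw [hausdorffMeasure_real, measure_mono_null inter_subset_right hs, mul_zero] at hle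
    exact nonpos_iff_eq_zero.1 hle
  choose! t ht hnull using hloc
  obtain ⟨c, hcs, hc, hcover⟩ := TopologicalSpace.countable_cover_nhdsWithin ht
  refine measure_mono_null ?_ ((measure_biUnion_null_iff hc).2 fun x hx ↦ hnull x (hcs hx))
  rintro _ ⟨y, hy, rfl⟩
  obtain ⟨x, hx, hyx⟩ := mem_iUnion₂.1 (hcover hy)
  exact mem_iUnion₂.2 ⟨x, hx, y, ⟨hyx, hy⟩, rfl⟩

theorem subsingleton_image_of_countable_image_diff {V : Type*} [MetricSpace V] {f : ℝ → V}
    {I s : Set ℝ} (hI : IsPreconnected I) (hf : LocallyLipschitzOn I f) (hs : volume s = 0)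
    (hc : (f '' (I \ s)).Countable) : (f '' I).Subsingleton := by
  rintro _ ⟨x, hx, rfl⟩ _ ⟨y, hy, rfl⟩
  set d : ℝ → ℝ := fun z ↦ dist (f z) (f x)
  have hd : LocallyLipschitzOn I d := fun z hz ↦
    let ⟨C, t, ht, hLip⟩ := hf hz
    ⟨_, t, ht, (LipschitzWith.dist_left (f x)).comp_lipschitzOnWith hLip⟩
  have hnull : volume (d '' I) = 0 := by
    rw [← inter_union_sdiff I s, image_union]
    refine measure_union_null ?_ (Set.Countable.measure_zero ?_ _)
    · exact volume_image_eq_zero_of_locallyLipschitzOn (hd.mono inter_subset_left)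
        (measure_mono_null inter_subset_right hs)
    · exact (hc.image (dist · (f x))).mono (image_image (dist · (f x)) f _).superset
  have hIcc : Icc 0 (d y) ⊆ d '' I := by
    rw [← dist_self (f x)]
    exact (hI.image d hd.continuousOn).ordConnected.out (mem_image_of_mem d hx)
      (mem_image_of_mem d hy)
  have hdy : d y ≤ 0 := by simpa using measure_mono_null hIcc hnull
  exact (dist_le_zero.1 hdy).symm

theorem volume_not_differentiableAt_eq_zero {V : Type*} [NormedAddCommGroup V]
    [NormedSpace ℝ V] [FiniteDimensional ℝ V] {f : ℝ → V} {I : Set ℝ} (hI : IsOpen I)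
    (hf : LocallyLipschitzOn I f) : volume {y ∈ I | ¬ DifferentiableAt ℝ f y} = 0 := by
  refine measure_null_of_locally_null _ fun y ⟨hy, _⟩ ↦ ?_
  obtain ⟨C, t, ht, hLip⟩ := hf hy
  rw [hI.nhdsWithin_eq hy] at ht
  obtain ⟨W, hWt, hWo, hyW⟩ := mem_nhds_iff.1 ht
  refine ⟨W ∩ {y ∈ I | ¬ DifferentiableAt ℝ f y},
    inter_mem (mem_nhdsWithin_of_mem_nhds (hWo.mem_nhds hyW)) self_mem_nhdsWithin, ?_⟩
  refine measure_mono_null ?_ (ae_iff.1 (hLip.mono hWt).ae_differentiableWithinAt_of_mem_real)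
  exact fun z ⟨hzW, _, hz⟩ hd ↦ hz ((hd hzW).differentiableAt (hWo.mem_nhds hzW))

variable {V W : Type*}

theorem locallyLipschitzOn_of_norm_sub_eq [SeminormedAddCommGroup V] [SeminormedAddCommGroup W]
    {C : Set V} {τ : V → W} (hτ : ∀ p ∈ C, ∀ q ∈ C, ‖τ p - τ q‖ = ‖p - q‖) :
    LocallyLipschitzOn C τ :=
  fun _ _ ↦ ⟨1, C, self_mem_nhdsWithin, .of_dist_le_mul fun p hp q hq ↦ by
    rw [dist_eq_norm, dist_eq_norm, hτ p hp q hq, NNReal.coe_one, one_mul]⟩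

theorem isBigO_sub_of_locallyLipschitzOn [NormedAddCommGroup V] {f : ℝ → V}
    {I : Set ℝ} (hI : IsOpen I) (hf : LocallyLipschitzOn I f) {y : ℝ} (hy : y ∈ I) :
    (fun z ↦ f z - f y) =O[𝓝 y] fun z ↦ z - y := by
  obtain ⟨C, t, ht, hLip⟩ := hf hy
  rw [hI.nhdsWithin_eq hy] at ht
  refine IsBigO.of_bound C ?_
  filter_upwards [ht] with z hz
  exact hLip.norm_sub_le hz (mem_of_mem_nhds ht)

theorem norm_normalize_sub_normalize_le [NormedAddCommGroup V] [NormedSpace ℝ V] {x : V}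
    (hx : x ≠ 0) (y : V) :
    ‖NormedSpace.normalize x - NormedSpace.normalize y‖ ≤ 2 / ‖x‖ * ‖x - y‖ := by
  have hdecomp : ‖x‖ • (NormedSpace.normalize x - NormedSpace.normalize y) =
      (x - y) + (‖y‖ - ‖x‖) • NormedSpace.normalize y := by
    simp only [smul_sub, sub_smul, NormedSpace.norm_smul_normalize]
    abel
  have hy : ‖NormedSpace.normalize y‖ ≤ 1 := by
    rcases eq_or_ne y 0 with rfl | hy
    · simp
    · exact (NormedSpace.norm_normalize hy).le
  rw [div_mul_eq_mul_div, le_div_iff₀' (norm_pos_iff.2 hx)]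
  calc ‖x‖ * ‖NormedSpace.normalize x - NormedSpace.normalize y‖
      = ‖(x - y) + (‖y‖ - ‖x‖) • NormedSpace.normalize y‖ := by
        rw [← hdecomp, norm_smul, norm_norm]
    _ ≤ ‖x - y‖ + |‖y‖ - ‖x‖| * 1 := by
        refine (norm_add_le _ _).trans ?_
        rw [norm_smul, Real.norm_eq_abs]
        gcongr
    _ ≤ ‖x - y‖ + ‖x - y‖ * 1 := by
        gcongr
        rw [norm_sub_rev]
        exact abs_norm_sub_norm_le y x
    _ = 2 * ‖x - y‖ := by ring

theorem locallyLipschitzOn_normalize [NormedAddCommGroup V] [NormedSpace ℝ V] :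
    LocallyLipschitzOn {0}ᶜ (NormedSpace.normalize : V → V) := by
  intro x hx
  have hpos : 0 < ‖x‖ / 2 := half_pos (norm_pos_iff.2 hx)
  refine ⟨(2 / (‖x‖ / 2)).toNNReal, {y | ‖x‖ / 2 < ‖y‖}, mem_nhdsWithin_of_mem_nhds
    (continuous_norm.continuousAt.eventually_const_lt (half_lt_self (norm_pos_iff.2 hx))), ?_⟩
  refine .of_dist_le_mul fun y hy z _ ↦ ?_
  have hy' : ‖x‖ / 2 < ‖y‖ := hy
  rw [dist_eq_norm, dist_eq_norm, Real.coe_toNNReal _ (by positivity)]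
  refine (norm_normalize_sub_normalize_le (norm_pos_iff.1 (hpos.trans hy')) z).trans ?_
  gcongr

theorem locallyLipschitzOn_comp {α : Type*} [PseudoEMetricSpace α] [PseudoEMetricSpace V]
    [PseudoEMetricSpace W] {g : V → W} {f : α → V} {I : Set α} {U : Set V}
    (hg : LocallyLipschitzOn U g) (hf : LocallyLipschitzOn I f) (h : MapsTo f I U) :
    LocallyLipschitzOn I (g ∘ f) := by
  intro y hy
  obtain ⟨C, t, ht, hgt⟩ := hg (h hy)
  obtain ⟨D, s, hs, hfs⟩ := hf hy
  have hlim : Tendsto f (𝓝[I] y) (𝓝[U] f y) := (hf.continuousOn y hy).tendsto_nhdsWithin h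
  exact ⟨C * D, s ∩ f ⁻¹' t, inter_mem hs (hlim ht),
    hgt.comp (hfs.mono inter_subset_left) fun z hz ↦ hz.2⟩

end LocallyLipschitz

section RealFunctions

variable {I : Set ℝ}

theorem eq_of_hasDerivWithinAt_Ici_zero {f : ℝ → ℝ} (hI : I.OrdConnected)
    (hf : ContinuousOn f I) (hd : ∀ y ∈ I, HasDerivWithinAt f 0 (Ici y) y) {x y : ℝ}
    (hx : x ∈ I) (hy : y ∈ I) : f x = f y := by
  wlog hxy : x ≤ y generalizing x y
  · exact (this hy hx (le_of_not_ge hxy)).symm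
  have hsub : Icc x y ⊆ I := hI.out hx hy
  exact (constant_of_has_deriv_right_zero (hf.mono hsub)
    (fun z hz ↦ hd z (hsub (Ico_subset_Icc_self hz))) y ⟨hxy, le_rfl⟩).symm

theorem eq_of_hasDerivWithinAt_Iic_zero {f : ℝ → ℝ} (hI : I.OrdConnected)
    (hf : ContinuousOn f I) (hd : ∀ y ∈ I, HasDerivWithinAt f 0 (Iic y) y) {x y : ℝ}
    (hx : x ∈ I) (hy : y ∈ I) : f x = f y := by
  have hneg : (Neg.neg ⁻¹' I).OrdConnected :=
    ⟨fun a ha b hb c hc ↦ hI.out hb ha ⟨neg_le_neg hc.2, neg_le_neg hc.1⟩⟩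
  have hd' : ∀ t ∈ Neg.neg ⁻¹' I, HasDerivWithinAt (f ∘ Neg.neg) 0 (Ici t) t := fun t ht ↦ by
    simpa using (hd (-t) ht).scomp t (hasDerivAt_neg t).hasDerivWithinAt
      fun s hs ↦ neg_le_neg (mem_Ici.1 hs)
  have h := eq_of_hasDerivWithinAt_Ici_zero hneg
    (hf.comp continuous_neg.continuousOn fun _ h ↦ h) hd' (x := -x) (y := -y) (by simpa) (by simpa)
  simpa using h

/-- To the right of `y` the maxima are attained by the increments of `α` and `α'`, to the left by
those of `β` and `β'`. -/
theorem sub_eq_sub_of_isLittleO_max {α β α' β' : ℝ → ℝ} (hIo : IsOpen I) (hI : I.OrdConnected)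
    (hmono : MonotoneOn (α - β) I) (hmono' : MonotoneOn (α' - β') I)
    (hα : ContinuousOn (α' - α) I) (hβ : ContinuousOn (β' - β) I)
    (h : ∀ y ∈ I, (fun z ↦ max (α' z - α' y) (β' z - β' y) - max (α z - α y) (β z - β y))
      =o[𝓝 y] fun z ↦ z - y) {y z : ℝ} (hy : y ∈ I) (hz : z ∈ I) :
    α' y - α y = α' z - α z ∧ β' y - β y = β' z - β z := by
  constructor
  · refine eq_of_hasDerivWithinAt_Ici_zero hI hα (fun y hy ↦ ?_) hy hz
    rw [hasDerivWithinAt_iff_isLittleO]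
    refine ((h y hy).mono nhdsWithin_le_nhds).congr' ?_ .rfl
    filter_upwards [self_mem_nhdsWithin, nhdsWithin_le_nhds (hIo.mem_nhds hy)] with z hyz hz
    have hle := hmono hy hz hyz
    have hle' := hmono' hy hz hyz
    simp only [Pi.sub_apply] at hle hle' ⊢
    rw [max_eq_left (by linarith), max_eq_left (by linarith), smul_zero]
    ring
  · refine eq_of_hasDerivWithinAt_Iic_zero hI hβ (fun y hy ↦ ?_) hy hz
    rw [hasDerivWithinAt_iff_isLittleO]
    refine ((h y hy).mono nhdsWithin_le_nhds).congr' ?_ .rfl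
    filter_upwards [self_mem_nhdsWithin, nhdsWithin_le_nhds (hIo.mem_nhds hy)] with z hzy hz
    have hle := hmono hz hy hzy
    have hle' := hmono' hz hy hzy
    simp only [Pi.sub_apply] at hle hle' ⊢
    rw [max_eq_right (by linarith), max_eq_right (by linarith), smul_zero]
    ring

theorem strictMonoOn_or_strictAntiOn_of_injOn {f : ℝ → ℝ} (hI : I.OrdConnected)
    (hf : ContinuousOn f I) (hinj : InjOn f I) : StrictMonoOn f I ∨ StrictAntiOn f I := by
  rcases I.eq_empty_or_nonempty with rfl | hne
  · exact .inl fun x hx ↦ hx.elim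
  have : Inhabited I := Classical.inhabited_of_nonempty hne.to_subtype
  exact (Continuous.strictMono_of_inj hf.domRestrict hinj.injective).imp
    strictMono_domRestrict.mp strictAntiOn_iff_strictAnti.mpr

end RealFunctions

section StrictConvexity

variable {X Y : Type*} [NormedAddCommGroup X] [NormedSpace ℝ X]
  [NormedAddCommGroup Y] [NormedSpace ℝ Y]

theorem wbtw_of_dist_eq [StrictConvexSpace ℝ X] {p q r : X} {p' q' r' : Y}
    (hpq : dist p' q' = dist p q) (hqr : dist q' r' = dist q r) (hpr : dist p' r' = dist p r)
    (h : Wbtw ℝ p' q' r') : Wbtw ℝ p q r := by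
  rw [← dist_add_dist_eq_iff, ← hpq, ← hqr, ← hpr]
  exact h.dist_add_dist

theorem collinear_of_dist_eq [StrictConvexSpace ℝ X] {p q r : X} {p' q' r' : Y}
    (hpq : dist p' q' = dist p q) (hqr : dist q' r' = dist q r) (hpr : dist p' r' = dist p r)
    (h : Collinear ℝ {p', q', r'}) : Collinear ℝ {p, q, r} := by
  have hqp : dist q' p' = dist q p := by rwa [dist_comm, dist_comm q]
  have hrq : dist r' q' = dist r q := by rwa [dist_comm, dist_comm r]
  have hrp : dist r' p' = dist r p := by rwa [dist_comm, dist_comm r]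
  rcases h.wbtw_or_wbtw_or_wbtw with h | h | h
  · exact (wbtw_of_dist_eq hpq hqr hpr h).collinear
  · have := (wbtw_of_dist_eq hqr hrp hqp h).collinear
    rwa [show ({q, r, p} : Set X) = {p, q, r} by grind] at this
  · have := (wbtw_of_dist_eq hrp hpq hrq h).collinear
    rwa [show ({r, p, q} : Set X) = {p, q, r} by grind] at this

theorem affineMap_apply_eq_of_mem_segment [StrictConvexSpace ℝ Y] {C : Set X} {τ : X → Y}
    (hτ : ∀ p ∈ C, ∀ q ∈ C, ‖τ p - τ q‖ = ‖p - q‖) (T : X →ᵃ[ℝ] Y) {a b m : X} (ha : a ∈ C)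
    (hb : b ∈ C) (hm : m ∈ C) (hTa : T a = τ a) (hTb : T b = τ b) (hmab : m ∈ segment ℝ a b) :
    T m = τ m := by
  simp only [← dist_eq_norm] at hτ
  rw [segment_eq_image_lineMap] at hmab
  obtain ⟨t, ht, rfl⟩ := hmab
  set m := AffineMap.lineMap a b t
  have hleft : dist (τ a) (τ m) = t * dist (τ a) (τ b) := by
    rw [hτ a ha m hm, hτ a ha b hb, dist_left_lineMap, Real.norm_of_nonneg ht.1]
  have hright : dist (τ m) (τ b) = (1 - t) * dist (τ a) (τ b) := by
    rw [hτ m hm b hb, hτ a ha b hb, dist_lineMap_right, Real.norm_of_nonneg (sub_nonneg.2 ht.2)]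
  rw [eq_lineMap_of_dist_eq_mul_of_dist_eq_mul hleft hright, AffineMap.apply_lineMap, hTa, hTb]

end StrictConvexity

section NormCorner

variable {X : Type*} [NormedAddCommGroup X] [NormedSpace ℝ X]

/-- The unit vector `u` is a corner of the unit sphere: near `u` the norm is to first order the
maximum of two distinct functionals `f` and `g` that support the unit ball at `u`. In a plane, the
level lines of the height `f - g` are the lines in the direction `u`. -/
structure IsNormCorner (f g : X →L[ℝ] ℝ) (u : X) : Prop where
  norm_eq_one : ‖u‖ = 1
  left_apply : f u = 1
  right_apply : g u = 1
  ne : f ≠ g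
  hasMaxFDerivAt : HasMaxFDerivAt (‖·‖) f g u

theorem exists_isNormCorner (hX : Module.finrank ℝ X = 2) {u : X} (hu : ‖u‖ = 1)
    (hd : ¬ DifferentiableAt ℝ (fun z : X ↦ ‖z‖) u) : ∃ f g, IsNormCorner f g u := by
  obtain ⟨f, g, hf, hg, hN⟩ := exists_hasMaxFDerivAt_norm hX (norm_ne_zero_iff.1 (hu ▸ one_ne_zero))
  exact ⟨f, g, hu, hf.trans hu, hg.trans hu, fun h ↦ hd (hN.differentiableAt_iff.2 h), hN⟩

namespace IsNormCorner

variable {f g : X →L[ℝ] ℝ} {u : X}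

theorem symm (h : IsNormCorner f g u) : IsNormCorner g f u :=
  ⟨h.norm_eq_one, h.right_apply, h.left_apply, h.ne.symm, h.hasMaxFDerivAt.symm⟩

theorem ne_zero (h : IsNormCorner f g u) : u ≠ 0 :=
  norm_ne_zero_iff.1 (h.norm_eq_one ▸ one_ne_zero)

theorem exists_continuousLinearEquiv (h : IsNormCorner f g u) (hX : Module.finrank ℝ X = 2) :
    ∃ e : X ≃L[ℝ] ℝ × ℝ, ∀ x, e x = (f x, f x - g x) :=
  exists_continuousLinearEquiv_prod_sub hX h.left_apply h.right_apply h.ne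

end IsNormCorner

end NormCorner

section ChordFamily

open MeasureTheory

variable {X Y : Type*} [NormedAddCommGroup X] [NormedSpace ℝ X]
  [NormedAddCommGroup Y]

/-- Chords of `C` in the direction `u`, parametrized over an open interval `I`: the chord at
`y ∈ I` leads from `b y` to `a y`, and both end points are locally Lipschitz in `y`. -/
structure IsChordFamily (C : Set X) (u : X) (I : Set ℝ) (a b : ℝ → X) : Prop where
  isOpen : IsOpen I
  ordConnected : I.OrdConnected
  mapsTo_right : MapsTo a I C
  mapsTo_left : MapsTo b I C
  locallyLipschitzOn_right : LocallyLipschitzOn I a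
  locallyLipschitzOn_left : LocallyLipschitzOn I b
  exists_sub_eq_smul : ∀ y ∈ I, ∃ t : ℝ, 0 < t ∧ a y - b y = t • u

namespace IsChordFamily

variable {C : Set X} {u : X} {I : Set ℝ} {a b : ℝ → X} {f g : X →L[ℝ] ℝ} {τ : X → Y} {y : ℝ}

theorem sub_eq_norm_smul (h : IsChordFamily C u I a b) (hu : ‖u‖ = 1) (hy : y ∈ I) :
    a y - b y = ‖a y - b y‖ • u := by
  obtain ⟨t, ht, htu⟩ := h.exists_sub_eq_smul y hy
  rw [htu, norm_smul, hu, mul_one, Real.norm_of_nonneg ht.le]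

theorem right_ne_left (h : IsChordFamily C u I a b) (hu : u ≠ 0) (hy : y ∈ I) : a y ≠ b y := by
  obtain ⟨t, ht, htu⟩ := h.exists_sub_eq_smul y hy
  rw [← sub_ne_zero, htu]
  exact smul_ne_zero ht.ne' hu

theorem hasMaxFDerivAt_norm (h : IsChordFamily C u I a b) (hN : HasMaxFDerivAt (‖·‖) f g u)
    (hy : y ∈ I) : HasMaxFDerivAt (‖·‖) f g (a y - b y) := by
  obtain ⟨t, ht, htu⟩ := h.exists_sub_eq_smul y hy
  exact htu ▸ hasMaxFDerivAt_norm_smul hN ht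

theorem isLittleO_norm (h : IsChordFamily C u I a b) (hN : HasMaxFDerivAt (‖·‖) f g u)
    (hy : y ∈ I) :
    (fun z ↦ ‖a z - b y‖ - ‖a y - b y‖ - max (f (a z - a y)) (g (a z - a y))) =o[𝓝 y]
      fun z ↦ z - y := by
  have hO := isBigO_sub_of_locallyLipschitzOn h.isOpen h.locallyLipschitzOn_right hy
  simpa only [sub_sub_sub_cancel_right] using
    (h.hasMaxFDerivAt_norm hN hy).isLittleO_comp (c := fun z ↦ a z - b y) rfl (by simpa using hO)

theorem locallyLipschitzOn_image_right (h : IsChordFamily C u I a b)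
    (hτ : ∀ p ∈ C, ∀ q ∈ C, ‖τ p - τ q‖ = ‖p - q‖) : LocallyLipschitzOn I (τ ∘ a) :=
  locallyLipschitzOn_comp (locallyLipschitzOn_of_norm_sub_eq hτ)
    h.locallyLipschitzOn_right h.mapsTo_right

theorem locallyLipschitzOn_image_left (h : IsChordFamily C u I a b)
    (hτ : ∀ p ∈ C, ∀ q ∈ C, ‖τ p - τ q‖ = ‖p - q‖) : LocallyLipschitzOn I (τ ∘ b) :=
  locallyLipschitzOn_comp (locallyLipschitzOn_of_norm_sub_eq hτ)
    h.locallyLipschitzOn_left h.mapsTo_left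

theorem image_ne (h : IsChordFamily C u I a b) (hu : u ≠ 0)
    (hτ : ∀ p ∈ C, ∀ q ∈ C, ‖τ p - τ q‖ = ‖p - q‖) (hy : y ∈ I) : τ (a y) ≠ τ (b y) := by
  rw [← sub_ne_zero, ← norm_ne_zero_iff, hτ _ (h.mapsTo_right hy) _ (h.mapsTo_left hy),
    norm_ne_zero_iff, sub_ne_zero]
  exact h.right_ne_left hu hy

variable [NormedSpace ℝ Y]

theorem not_differentiableAt_norm_image (h : IsChordFamily C u I a b)
    (hN : HasMaxFDerivAt (‖·‖) f g u) (hfg : ∀ y ∈ I, f (a y) - g (a y) = y)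
    (hτ : ∀ p ∈ C, ∀ q ∈ C, ‖τ p - τ q‖ = ‖p - q‖) (hy : y ∈ I) (ha : DifferentiableAt ℝ a y)
    (hτa : DifferentiableAt ℝ (τ ∘ a) y) :
    ¬ DifferentiableAt ℝ (fun z : Y ↦ ‖z‖) (τ (a y) - τ (b y)) := by
  intro hd
  have hlength : DifferentiableAt ℝ (fun z ↦ ‖a z - b y‖) y := by
    refine (hd.comp y (hτa.sub_const (τ (b y)))).congr_of_eventuallyEq ?_
    filter_upwards [h.isOpen.mem_nhds hy] with z hz
    exact (hτ _ (h.mapsTo_right hz) _ (h.mapsTo_left hy)).symm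
  have hcorner := (h.hasMaxFDerivAt_norm hN hy).comp (c := fun z ↦ a z - b y) rfl
    (ha.hasFDerivAt.sub_const (b y))
  have heq : f (deriv a y) = g (deriv a y) :=
    DFunLike.congr_fun (hcorner.differentiableAt_iff.1 hlength) 1
  have hheight : HasDerivAt (fun z ↦ f (a z) - g (a z)) 1 y :=
    (hasDerivAt_id y).congr_of_eventuallyEq (by
      filter_upwards [h.isOpen.mem_nhds hy] with z hz using hfg z hz)
  have hzero := ((f - g).hasFDerivAt.comp_hasDerivAt y ha.hasDerivAt).unique hheight
  simp [heq] at hzero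

theorem image (h : IsChordFamily C u I a b) (hu : u ≠ 0)
    (hτ : ∀ p ∈ C, ∀ q ∈ C, ‖τ p - τ q‖ = ‖p - q‖) {w : Y}
    (hw : ∀ y ∈ I, NormedSpace.normalize (τ (a y) - τ (b y)) = w) :
    IsChordFamily (τ '' C) w I (τ ∘ a) (τ ∘ b) where
  isOpen := h.isOpen
  ordConnected := h.ordConnected
  mapsTo_right := (mapsTo_image τ C).comp h.mapsTo_right
  mapsTo_left := (mapsTo_image τ C).comp h.mapsTo_left
  locallyLipschitzOn_right := h.locallyLipschitzOn_image_right hτ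
  locallyLipschitzOn_left := h.locallyLipschitzOn_image_left hτ
  exists_sub_eq_smul y hy :=
    ⟨‖τ (a y) - τ (b y)‖, norm_pos_iff.2 (sub_ne_zero.2 (h.image_ne hu hτ hy)),
      hw y hy ▸ (NormedSpace.norm_smul_normalize _).symm⟩

/-- Almost every image chord points in one of the countably many directions in which the norm of
`Y` is not differentiable, and the direction is a locally Lipschitz function of the chord. -/
theorem exists_isChordFamily_image [FiniteDimensional ℝ X] (hY : Module.finrank ℝ Y = 2)
    (h : IsChordFamily C u I a b) (hI : I.Nonempty) (hu : u ≠ 0)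
    (hN : HasMaxFDerivAt (‖·‖) f g u) (hfg : ∀ y ∈ I, f (a y) - g (a y) = y)
    (hτ : ∀ p ∈ C, ∀ q ∈ C, ‖τ p - τ q‖ = ‖p - q‖) :
    ∃ w : Y, ‖w‖ = 1 ∧ ¬ DifferentiableAt ℝ (fun z : Y ↦ ‖z‖) w ∧
      IsChordFamily (τ '' C) w I (τ ∘ a) (τ ∘ b) := by
  have : FiniteDimensional ℝ Y := Module.finite_of_finrank_pos (hY ▸ two_pos)
  let n : ℝ → Y := fun y ↦ NormedSpace.normalize (τ (a y) - τ (b y))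
  let S : Set ℝ := {y ∈ I | ¬ DifferentiableAt ℝ a y} ∪ {y ∈ I | ¬ DifferentiableAt ℝ (τ ∘ a) y}
  have hS : volume S = 0 := measure_union_null
    (volume_not_differentiableAt_eq_zero h.isOpen h.locallyLipschitzOn_right)
    (volume_not_differentiableAt_eq_zero h.isOpen (h.locallyLipschitzOn_image_right hτ))
  have hn : LocallyLipschitzOn I n := locallyLipschitzOn_comp locallyLipschitzOn_normalize
    ((h.locallyLipschitzOn_image_right hτ).sub (h.locallyLipschitzOn_image_left hτ))
    fun y hy ↦ sub_ne_zero.2 (h.image_ne hu hτ hy)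
  have hnS : ∀ y ∈ I \ S, ‖n y‖ = 1 ∧ ¬ DifferentiableAt ℝ (fun z : Y ↦ ‖z‖) (n y) := by
    rintro y ⟨hy, hyS⟩
    obtain ⟨ha, hτa⟩ : DifferentiableAt ℝ a y ∧ DifferentiableAt ℝ (τ ∘ a) y := by
      simpa [S, hy] using hyS
    have hne := sub_ne_zero.2 (h.image_ne hu hτ hy)
    refine ⟨NormedSpace.norm_normalize hne, fun hd ↦
      h.not_differentiableAt_norm_image hN hfg hτ hy ha hτa ?_⟩
    rwa [← NormedSpace.norm_smul_normalize (τ (a y) - τ (b y)),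
      ← differentiableAt_norm_smul (norm_ne_zero_iff.2 hne)]
  have hconst : (n '' I).Subsingleton := subsingleton_image_of_countable_image_diff
    h.ordConnected.isPreconnected hn hS
    <| (countable_not_differentiableAt_norm hY).mono <| by
      rintro _ ⟨y, hy, rfl⟩
      exact hnS y hy
  obtain ⟨y, hy⟩ : (I \ S).Nonempty := nonempty_of_measure_ne_zero (μ := volume) <| by
    rw [measure_sdiff_null hS]
    exact (h.isOpen.measure_pos volume hI).ne'
  exact ⟨n y, (hnS y hy).1, (hnS y hy).2, h.image hu hτ fun z hz ↦
    hconst (mem_image_of_mem n hz) (mem_image_of_mem n hy.1)⟩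

variable {w : Y} {f' g' : Y →L[ℝ] ℝ}

theorem mem_line_iff (h : IsChordFamily C u I a b) (hc : IsNormCorner f g u)
    (hX : Module.finrank ℝ X = 2) (hy : y ∈ I) {p : X} :
    p ∈ line[ℝ, a y, b y] ↔ f p - g p = f (a y) - g (a y) := by
  obtain ⟨t, ht, htu⟩ := h.exists_sub_eq_smul y hy
  have hline : ∀ s, AffineMap.lineMap (a y) (b y) s = a y - (s * t) • u := fun s ↦ by
    rw [AffineMap.lineMap_apply_module', ← neg_sub, htu, mul_smul, smul_neg]
    abel
  rw [mem_affineSpan_pair_iff_exists_lineMap_eq]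
  constructor
  · rintro ⟨s, rfl⟩
    simp [hline, hc.left_apply, hc.right_apply]
  · intro hp
    obtain ⟨e, he⟩ := hc.exists_continuousLinearEquiv hX
    refine ⟨(f (a y) - f p) / t, e.injective ?_⟩
    rw [hline, div_mul_cancel₀ _ ht.ne', he, he]
    ext
    · simp [hc.left_apply]
    · simp only [hc.left_apply, hc.right_apply, map_sub, map_smul, smul_eq_mul, mul_one]
      linarith

theorem injOn_image_height [StrictConvexSpace ℝ X] (hX : Module.finrank ℝ X = 2)
    (hY : Module.finrank ℝ Y = 2) (h : IsChordFamily C u I a b)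
    (h' : IsChordFamily (τ '' C) w I (τ ∘ a) (τ ∘ b)) (hc : IsNormCorner f g u)
    (hc' : IsNormCorner f' g' w) (hfg : ∀ y ∈ I, f (a y) - g (a y) = y)
    (hτ : ∀ p ∈ C, ∀ q ∈ C, ‖τ p - τ q‖ = ‖p - q‖) :
    InjOn (f' ∘ τ ∘ a - g' ∘ τ ∘ a) I := by
  intro y hy z hz heq
  simp only [← dist_eq_norm] at hτ
  have hY' : τ (a z) ∈ line[ℝ, τ (a y), τ (b y)] := (h'.mem_line_iff hc' hY hy).2 heq.symm
  have hcol : Collinear ℝ {a z, a y, b y} := collinear_of_dist_eq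
    (hτ _ (h.mapsTo_right hz) _ (h.mapsTo_right hy))
    (hτ _ (h.mapsTo_right hy) _ (h.mapsTo_left hy))
    (hτ _ (h.mapsTo_right hz) _ (h.mapsTo_left hy)) (collinear_insert_of_mem_affineSpan_pair hY')
  have hX' : a z ∈ line[ℝ, a y, b y] := hcol.mem_affineSpan_of_mem_of_ne (by simp) (by simp)
    (by simp) (h.right_ne_left hc.ne_zero hy)
  rw [← hfg y hy, ← hfg z hz]
  exact ((h.mem_line_iff hc hX hy).1 hX').symm

theorem exists_monotoneOn_image_height [StrictConvexSpace ℝ X] (hX : Module.finrank ℝ X = 2)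
    (hY : Module.finrank ℝ Y = 2) (h : IsChordFamily C u I a b)
    (h' : IsChordFamily (τ '' C) w I (τ ∘ a) (τ ∘ b)) (hc : IsNormCorner f g u)
    (hw : ‖w‖ = 1) (hd : ¬ DifferentiableAt ℝ (fun z : Y ↦ ‖z‖) w)
    (hfg : ∀ y ∈ I, f (a y) - g (a y) = y)
    (hτ : ∀ p ∈ C, ∀ q ∈ C, ‖τ p - τ q‖ = ‖p - q‖) :
    ∃ f' g' : Y →L[ℝ] ℝ, IsNormCorner f' g' w ∧ MonotoneOn (f' ∘ τ ∘ a - g' ∘ τ ∘ a) I := by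
  obtain ⟨f', g', hc'⟩ := exists_isNormCorner hY hw hd
  have hcont : ContinuousOn (f' ∘ τ ∘ a - g' ∘ τ ∘ a) I :=
    (f' - g').continuous.comp_continuousOn h'.locallyLipschitzOn_right.continuousOn
  rcases strictMonoOn_or_strictAntiOn_of_injOn h.ordConnected hcont
    (injOn_image_height hX hY h h' hc hc' hfg hτ) with hmono | hanti
  · exact ⟨f', g', hc', hmono.monotoneOn⟩
  · refine ⟨g', f', hc'.symm, ?_⟩
    rw [← neg_sub]
    exact hanti.antitoneOn.neg

theorem sub_eq_sub_of_monotoneOn (h : IsChordFamily C u I a b)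
    (h' : IsChordFamily (τ '' C) w I (τ ∘ a) (τ ∘ b)) (hc : IsNormCorner f g u)
    (hc' : IsNormCorner f' g' w) (hfg : ∀ y ∈ I, f (a y) - g (a y) = y)
    (hmono' : MonotoneOn (f' ∘ τ ∘ a - g' ∘ τ ∘ a) I)
    (hτ : ∀ p ∈ C, ∀ q ∈ C, ‖τ p - τ q‖ = ‖p - q‖) {z : ℝ} (hy : y ∈ I) (hz : z ∈ I) :
    f' (τ (a y)) - f (a y) = f' (τ (a z)) - f (a z) ∧
      g' (τ (a y)) - g (a y) = g' (τ (a z)) - g (a z) := by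
  have hcont : ContinuousOn a I := h.locallyLipschitzOn_right.continuousOn
  have hcont' : ContinuousOn (τ ∘ a) I := h'.locallyLipschitzOn_right.continuousOn
  have hmono : MonotoneOn (f ∘ a - g ∘ a) I := (monotoneOn_id (s := I)).congr
    fun y hy ↦ (hfg y hy).symm
  refine sub_eq_sub_of_isLittleO_max (α := f ∘ a) (β := g ∘ a) (α' := f' ∘ τ ∘ a)
    (β' := g' ∘ τ ∘ a) h.isOpen h.ordConnected hmono hmono'
    ((f'.continuous.comp_continuousOn hcont').sub (f.continuous.comp_continuousOn hcont))
    ((g'.continuous.comp_continuousOn hcont').sub (g.continuous.comp_continuousOn hcont))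
    (fun y hy ↦ ?_) hy hz
  refine ((h.isLittleO_norm hc.hasMaxFDerivAt hy).sub
    (h'.isLittleO_norm hc'.hasMaxFDerivAt hy)).congr' ?_ .rfl
  filter_upwards [h.isOpen.mem_nhds hy] with z hz
  have hb := h.mapsTo_left hy
  simp only [Function.comp_apply, hτ _ (h.mapsTo_right hz) _ hb, hτ _ (h.mapsTo_right hy) _ hb,
    map_sub]
  ring

theorem exists_affineMap_of_sub_eq_sub (hX : Module.finrank ℝ X = 2)
    (hY : Module.finrank ℝ Y = 2) (h : IsChordFamily C u I a b)
    (h' : IsChordFamily (τ '' C) w I (τ ∘ a) (τ ∘ b)) (hI : I.Nonempty)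
    (hc : IsNormCorner f g u) (hc' : IsNormCorner f' g' w)
    (hτ : ∀ p ∈ C, ∀ q ∈ C, ‖τ p - τ q‖ = ‖p - q‖)
    (hsub : ∀ y ∈ I, ∀ z ∈ I, f' (τ (a y)) - f (a y) = f' (τ (a z)) - f (a z) ∧
      g' (τ (a y)) - g (a y) = g' (τ (a z)) - g (a z)) :
    ∃ T : X →ᵃ[ℝ] Y, ∀ y ∈ I, T (a y) = τ (a y) ∧ T (b y) = τ (b y) := by
  obtain ⟨e, he⟩ := hc.exists_continuousLinearEquiv hX
  obtain ⟨e', he'⟩ := hc'.exists_continuousLinearEquiv hY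
  obtain ⟨y₀, hy₀⟩ := hI
  let L : X →ₗ[ℝ] Y := (e.trans e'.symm).toLinearMap
  have hL : ∀ {x x'}, e x = e' x' → L x = x' := fun hx ↦ by simp [L, hx]
  have hLu : L u = w := hL <| by
    rw [he, he', hc.left_apply, hc.right_apply, hc'.left_apply, hc'.right_apply]
  have hLa : ∀ y ∈ I, L (a y - a y₀) = τ (a y) - τ (a y₀) := fun y hy ↦ hL <| by
    obtain ⟨hf, hg⟩ := hsub y hy y₀ hy₀
    rw [he, he', map_sub, map_sub, map_sub, map_sub]
    ext <;> linarith
  have hLb : ∀ y ∈ I, L (a y - b y) = τ (a y) - τ (b y) := fun y hy ↦ by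
    have hchord' := h'.sub_eq_norm_smul hc'.norm_eq_one hy
    simp only [Function.comp_apply, hτ _ (h.mapsTo_right hy) _ (h.mapsTo_left hy)] at hchord'
    rw [h.sub_eq_norm_smul hc.norm_eq_one hy, map_smul, hLu, hchord']
  refine ⟨.mk' (fun p ↦ L (p - a y₀) + τ (a y₀)) L (a y₀) (by simp), fun y hy ↦ ⟨?_, ?_⟩⟩
  · rw [AffineMap.coe_mk', hLa y hy, sub_add_cancel]
  · have hsplit : b y - a y₀ = (a y - a y₀) - (a y - b y) := by abel
    rw [AffineMap.coe_mk', hsplit, map_sub, hLa y hy, hLb y hy]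
    abel

theorem exists_affineMap [StrictConvexSpace ℝ X] (hX : Module.finrank ℝ X = 2)
    (hY : Module.finrank ℝ Y = 2) (h : IsChordFamily C u I a b) (hI : I.Nonempty)
    (hc : IsNormCorner f g u) (hfg : ∀ y ∈ I, f (a y) - g (a y) = y)
    (hτ : ∀ p ∈ C, ∀ q ∈ C, ‖τ p - τ q‖ = ‖p - q‖) :
    ∃ T : X →ᵃ[ℝ] Y, ∀ y ∈ I, T (a y) = τ (a y) ∧ T (b y) = τ (b y) := by
  have : FiniteDimensional ℝ X := Module.finite_of_finrank_pos (hX ▸ two_pos)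
  obtain ⟨w, hw, hd, h'⟩ :=
    h.exists_isChordFamily_image hY hI hc.ne_zero hc.hasMaxFDerivAt hfg hτ
  obtain ⟨f', g', hc', hmono'⟩ := exists_monotoneOn_image_height hX hY h h' hc hw hd hfg hτ
  exact exists_affineMap_of_sub_eq_sub hX hY h h' hI hc hc' hτ fun y hy z hz ↦
    sub_eq_sub_of_monotoneOn h h' hc hc' hfg hmono' hτ hy hz

end IsChordFamily

end ChordFamily

section ConvexBody

theorem lt_csSup_preimage_of_mem_interior {α V : Type*} [ConditionallyCompleteLinearOrder α]
    [TopologicalSpace α] [OrderTopology α] [DenselyOrdered α] [NoMaxOrder α] [TopologicalSpace V]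
    {K : Set V} {c : α → V} (hc : Continuous c) (hbdd : BddAbove (c ⁻¹' K)) {t : α}
    (ht : c t ∈ interior K) : t < sSup (c ⁻¹' K) := by
  have hmem : ∀ᶠ s in 𝓝[>] t, c s ∈ interior K :=
    (hc.continuousAt.eventually_mem (isOpen_interior.mem_nhds ht)).filter_mono nhdsWithin_le_nhds
  obtain ⟨s, hs, hts⟩ := (hmem.and self_mem_nhdsWithin).exists
  exact lt_of_lt_of_le hts (le_csSup hbdd (interior_subset (s := K) hs))

theorem csSup_preimage_mem_frontier {α V : Type*} [ConditionallyCompleteLinearOrder α]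
    [TopologicalSpace α] [OrderTopology α] [DenselyOrdered α] [NoMaxOrder α] [TopologicalSpace V]
    {K : Set V} (hK : IsClosed K) {c : α → V} (hc : Continuous c) (hbdd : BddAbove (c ⁻¹' K))
    (hne : (c ⁻¹' K).Nonempty) : c (sSup (c ⁻¹' K)) ∈ frontier K := by
  rw [hK.frontier_eq]
  exact ⟨(hK.preimage hc).csSup_mem hne hbdd, fun hint ↦
    (lt_csSup_preimage_of_mem_interior hc hbdd hint).false⟩

variable {X : Type*} [NormedAddCommGroup X] [NormedSpace ℝ X] {K : Set X}

theorem exists_concaveOn_mem_frontier {E : Type*} [NormedAddCommGroup E] [NormedSpace ℝ E]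
    (e : X ≃L[ℝ] ℝ × E) (hK : IsCompact K) (hconv : Convex ℝ K) :
    ∃ r : E → ℝ, ConcaveOn ℝ ((fun k ↦ (e k).2) '' interior K) r ∧
      (∀ k ∈ interior K, e.symm (r (e k).2, (e k).2) ∈ frontier K) ∧
      ∀ k ∈ interior K, (e k).1 < r (e k).2 := by
  let c : E → ℝ → X := fun y x ↦ e.symm (x, y)
  have hc : ∀ y, Continuous (c y) := fun y ↦ by fun_prop
  have hbdd : ∀ y, BddAbove (c y ⁻¹' K) := fun y ↦ by
    refine (hK.image (f := fun k ↦ (e k).1) (by fun_prop)).bddAbove.mono fun x hx ↦ ?_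
    exact ⟨c y x, hx, by simp [c]⟩
  have hek : ∀ k, c (e k).2 (e k).1 = k := fun k ↦ e.symm_apply_apply k
  have hne : ∀ k ∈ interior K, (c (e k).2 ⁻¹' K).Nonempty := fun k hk ↦
    ⟨(e k).1, by simpa only [mem_preimage, hek] using interior_subset hk⟩
  refine ⟨fun y ↦ sSup (c y ⁻¹' K), ⟨?_, ?_⟩, fun k hk ↦
    csSup_preimage_mem_frontier hK.isClosed (hc _) (hbdd _) (hne k hk), fun k hk ↦
    lt_csSup_preimage_of_mem_interior (hc _) (hbdd _) ((hek k).symm ▸ hk)⟩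
  · exact hconv.interior.is_linear_image
      ((LinearMap.snd ℝ ℝ E).comp e.toLinearMap).isLinear
  · rintro _ ⟨k, hk, rfl⟩ _ ⟨k', hk', rfl⟩ s t hs ht hst
    have hmax : ∀ k ∈ interior K, c (e k).2 (sSup (c (e k).2 ⁻¹' K)) ∈ K := fun k hk ↦
      (hK.isClosed.preimage (hc _)).csSup_mem (hne k hk) (hbdd _)
    refine le_csSup (hbdd _) ?_
    simpa [c, ← map_smul, ← map_add] using hconv (hmax k hk) (hmax k' hk') hs ht hst

theorem exists_convexOn_mem_frontier {E : Type*} [NormedAddCommGroup E] [NormedSpace ℝ E]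
    (e : X ≃L[ℝ] ℝ × E) (hK : IsCompact K) (hconv : Convex ℝ K) :
    ∃ l : E → ℝ, ConvexOn ℝ ((fun k ↦ (e k).2) '' interior K) l ∧
      (∀ k ∈ interior K, e.symm (l (e k).2, (e k).2) ∈ frontier K) ∧
      ∀ k ∈ interior K, l (e k).2 < (e k).1 := by
  obtain ⟨r, hr, hrK, hlt⟩ := exists_concaveOn_mem_frontier
    (e.trans ((ContinuousLinearEquiv.neg ℝ).prodCongr (.refl ℝ E))) hK hconv
  exact ⟨-r, neg_convexOn_iff.2 hr, hrK, fun k hk ↦ neg_lt.2 (hlt k hk)⟩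

theorem mem_segment_symm_mk {E : Type*} [NormedAddCommGroup E] [NormedSpace ℝ E]
    (e : X ≃L[ℝ] ℝ × E) {k : X} {l r : ℝ} (hl : l ≤ (e k).1) (hr : (e k).1 ≤ r) :
    k ∈ segment ℝ (e.symm (l, (e k).2)) (e.symm (r, (e k).2)) := by
  have hmem : e k ∈ segment ℝ (l, (e k).2) (r, (e k).2) := by
    rw [← Prod.image_mk_segment_left, segment_eq_Icc (hl.trans hr)]
    exact ⟨(e k).1, ⟨hl, hr⟩, rfl⟩
  have himage := mem_image_of_mem e.symm.toLinearMap.toAffineMap hmem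
  rw [image_segment] at himage
  simpa using himage

theorem isOpen_image_snd_interior (e : X ≃L[ℝ] ℝ × ℝ) (K : Set X) :
    IsOpen ((fun k ↦ (e k).2) '' interior K) :=
  (isOpenMap_snd.comp e.toHomeomorph.isOpenMap) _ isOpen_interior

theorem exists_isChordFamily {e : X ≃L[ℝ] ℝ × ℝ} {u : X} (he : e u = (1, 0))
    (hK : IsCompact K) (hconv : Convex ℝ K) :
    ∃ a b, IsChordFamily (frontier K) u ((fun k ↦ (e k).2) '' interior K) a b ∧
      (∀ y, (e (a y)).2 = y) ∧ ∀ k ∈ interior K, k ∈ segment ℝ (b (e k).2) (a (e k).2) := by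
  obtain ⟨r, hr, hrK, hlt⟩ := exists_concaveOn_mem_frontier e hK hconv
  obtain ⟨l, hl, hlK, hgt⟩ := exists_convexOn_mem_frontier e hK hconv
  have hIo := isOpen_image_snd_interior e K
  have hlip : ∀ s : ℝ → ℝ, LocallyLipschitzOn ((fun k ↦ (e k).2) '' interior K) s →
      LocallyLipschitzOn ((fun k ↦ (e k).2) '' interior K) fun y ↦ e.symm (s y, y) :=
    fun s hs y hy ↦ by
    obtain ⟨C, t, ht, hst⟩ := hs hy
    exact ⟨_, t, ht, e.symm.lipschitz.comp_lipschitzOnWith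
      (hst.prodMk LipschitzWith.id.lipschitzOnWith)⟩
  refine ⟨fun y ↦ e.symm (r y, y), fun y ↦ e.symm (l y, y),
    { isOpen := hIo
      ordConnected := hr.1.ordConnected
      mapsTo_right := forall_mem_image.2 hrK
      mapsTo_left := forall_mem_image.2 hlK
      locallyLipschitzOn_right := hlip r (hr.locallyLipschitzOn hIo)
      locallyLipschitzOn_left := hlip l (hl.locallyLipschitzOn hIo)
      exists_sub_eq_smul := ?_ }, by simp, fun k hk ↦
    mem_segment_symm_mk e (hgt k hk).le (hlt k hk).le⟩
  rintro _ ⟨k, hk, rfl⟩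
  refine ⟨r (e k).2 - l (e k).2, sub_pos.2 ((hgt k hk).trans (hlt k hk)), e.injective ?_⟩
  simp [he]

theorem isCompact_convexJoin {V : Type*} [AddCommGroup V] [Module ℝ V] [TopologicalSpace V]
    [ContinuousAdd V] [ContinuousSMul ℝ V] {s t : Set V} (hs : IsCompact s) (ht : IsCompact t) :
    IsCompact (convexJoin ℝ s t) := by
  have himage : convexJoin ℝ s t =
      (fun x : V × V × ℝ ↦ (1 - x.2.2) • x.1 + x.2.2 • x.2.1) '' (s ×ˢ t ×ˢ Icc 0 1) := by
    ext x
    simp [mem_convexJoin, segment_eq_image, and_assoc]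
  rw [himage]
  exact (hs.prod (ht.prod isCompact_Icc)).image (by fun_prop)

theorem subset_convexJoin_of_interior_subset {V : Type*} [NormedAddCommGroup V] [NormedSpace ℝ V]
    {K E : Set V} (hconv : Convex ℝ K) (hne : (interior K).Nonempty) (hE : IsCompact E)
    (h : interior K ⊆ convexJoin ℝ E E) : K ⊆ convexJoin ℝ E E := by
  refine subset_closure.trans ?_
  rw [← hconv.closure_interior_eq_closure_of_nonempty_interior hne]
  exact closure_minimal h (isCompact_convexJoin hE hE).isClosed

end ConvexBody

section Frontier

variable {X Y : Type*} [NormedAddCommGroup X] [NormedSpace ℝ X]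
  [NormedAddCommGroup Y] [NormedSpace ℝ Y] {K : Set X} {τ : X → Y}

theorem isCompact_setOf_affineMap_eq [FiniteDimensional ℝ X] {C : Set X} (hC : IsCompact C)
    (hτ : ContinuousOn τ C) (T : X →ᵃ[ℝ] Y) : IsCompact {p ∈ C | T p = τ p} := by
  have hT : ContinuousOn T C := T.continuous_of_finiteDimensional.continuousOn
  refine hC.of_isClosed_subset ?_ (sep_subset _ _)
  convert (hT.sub hτ).preimage_isClosed_of_isClosed hC.isClosed
    (isClosed_singleton (x := (0 : Y))) using 1
  ext p
  simp [sub_eq_zero]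

theorem eqOn_frontier_of_interior_subset_convexJoin [FiniteDimensional ℝ X] [StrictConvexSpace ℝ Y]
    (hK : IsCompact K) (hconv : Convex ℝ K) (hne : (interior K).Nonempty)
    (hτ : ∀ p ∈ frontier K, ∀ q ∈ frontier K, ‖τ p - τ q‖ = ‖p - q‖) (T : X →ᵃ[ℝ] Y)
    (hT : interior K ⊆ convexJoin ℝ {p ∈ frontier K | T p = τ p} {p ∈ frontier K | T p = τ p}) :
    EqOn T τ (frontier K) := by
  intro m hm
  have hfr : frontier K ⊆ K := hK.isClosed.frontier_subset
  have hE := isCompact_setOf_affineMap_eq (hK.of_isClosed_subset isClosed_frontier hfr)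
    (locallyLipschitzOn_of_norm_sub_eq hτ).continuousOn T
  obtain ⟨a, ⟨ha, hTa⟩, b, ⟨hb, hTb⟩, hmab⟩ :=
    mem_convexJoin.1 (subset_convexJoin_of_interior_subset hconv hne hE hT (hfr hm))
  exact affineMap_apply_eq_of_mem_segment hτ T ha hb hm hTa hTb hmab

theorem exists_affineMap_eqOn_frontier [StrictConvexSpace ℝ X] [StrictConvexSpace ℝ Y]
    (hX : Module.finrank ℝ X = 2) (hY : Module.finrank ℝ Y = 2) {u : X} (hu : ‖u‖ = 1)
    (hd : ¬ DifferentiableAt ℝ (fun z : X ↦ ‖z‖) u) (hK : IsCompact K) (hconv : Convex ℝ K)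
    (hne : (interior K).Nonempty)
    (hτ : ∀ p ∈ frontier K, ∀ q ∈ frontier K, ‖τ p - τ q‖ = ‖p - q‖) :
    ∃ T : X →ᵃ[ℝ] Y, EqOn T τ (frontier K) := by
  have : FiniteDimensional ℝ X := Module.finite_of_finrank_pos (hX ▸ two_pos)
  obtain ⟨f, g, hc⟩ := exists_isNormCorner hX hu hd
  obtain ⟨e, he⟩ := hc.exists_continuousLinearEquiv hX
  have heu : e u = (1, 0) := by rw [he, hc.left_apply, hc.right_apply, sub_self]
  obtain ⟨a, b, h, hheight, hseg⟩ := exists_isChordFamily heu hK hconv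
  obtain ⟨T, hT⟩ := h.exists_affineMap hX hY (hne.image _) hc
    (fun y _ ↦ by simpa [he] using hheight y) hτ
  refine ⟨T, eqOn_frontier_of_interior_subset_convexJoin hK hconv hne hτ T fun k hk ↦ ?_⟩
  have hy := mem_image_of_mem (fun k ↦ (e k).2) hk
  exact mem_convexJoin.2 ⟨_, ⟨h.mapsTo_left hy, (hT _ hy).2⟩, _,
    ⟨h.mapsTo_right hy, (hT _ hy).1⟩, hseg k hk⟩

theorem norm_linear_of_isometry_frontier (hX : Module.finrank ℝ X = 2) (hK : IsCompact K)
    (hconv : Convex ℝ K) (hne : (interior K).Nonempty) (T : X →ᵃ[ℝ] Y)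
    (hT : ∀ p ∈ frontier K, ∀ q ∈ frontier K, ‖T p - T q‖ = ‖p - q‖) (d : X) :
    ‖T.linear d‖ = ‖d‖ := by
  rcases eq_or_ne d 0 with rfl | hd
  · simp
  obtain ⟨e, he⟩ := exists_continuousLinearEquiv_prod hX hd
  obtain ⟨a, b, h, -⟩ := exists_isChordFamily he hK hconv
  obtain ⟨y, hy⟩ := hne.image fun k ↦ (e k).2
  obtain ⟨t, ht, htd⟩ := h.exists_sub_eq_smul y hy
  have hchord := hT _ (h.mapsTo_right hy) _ (h.mapsTo_left hy)
  rw [← vsub_eq_sub (T _), ← T.linearMap_vsub, vsub_eq_sub, htd, map_smul, norm_smul,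
    norm_smul] at hchord
  exact mul_left_cancel₀ (norm_ne_zero_iff.2 ht.ne') hchord

end Frontier

theorem stmt14_general {X Y : Type*} [NormedAddCommGroup X] [NormedSpace ℝ X]
    [NormedAddCommGroup Y] [NormedSpace ℝ Y] [StrictConvexSpace ℝ X] [StrictConvexSpace ℝ Y]
    (hX : Module.finrank ℝ X = 2) (hY : Module.finrank ℝ Y = 2)
    (hND : {u : X | ‖u‖ = 1 ∧ ¬ DifferentiableAt ℝ (fun z : X ↦ ‖z‖) u}.Nonempty)
    {K : Set X} (hK : IsCompact K) (hconv : Convex ℝ K) (hne : (interior K).Nonempty) {τ : X → Y}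
    (hτ : ∀ p ∈ frontier K, ∀ q ∈ frontier K, ‖τ p - τ q‖ = ‖p - q‖) :
    (∃ A : X →ᵃ[ℝ] Y, Isometry A ∧ ∀ p ∈ frontier K, A p = τ p) ∧ Nonempty (X ≃ₗᵢ[ℝ] Y) := by
  have : FiniteDimensional ℝ X := Module.finite_of_finrank_pos (hX ▸ two_pos)
  have : FiniteDimensional ℝ Y := Module.finite_of_finrank_pos (hY ▸ two_pos)
  obtain ⟨u, hu, hd⟩ := hND
  obtain ⟨T, hT⟩ := exists_affineMap_eqOn_frontier hX hY hu hd hK hconv hne hτ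
  have hlin : ∀ d, ‖T.linear d‖ = ‖d‖ := norm_linear_of_isometry_frontier hX hK hconv hne T
    fun p hp q hq ↦ by rw [hT hp, hT hq, hτ p hp q hq]
  refine ⟨⟨T, Isometry.of_dist_eq fun p q ↦ ?_, hT⟩,
    ⟨LinearIsometry.toLinearIsometryEquiv ⟨T.linear, hlin⟩ (hX.trans hY.symm)⟩⟩
  rw [dist_eq_norm, dist_eq_norm, ← vsub_eq_sub, ← T.linearMap_vsub, vsub_eq_sub, hlin]

end

/-- Theorem `coroultra`, Mankiewicz property for convex curves.
Let `X`, `Y` be strictly convex normed planes whose sets of non-differentiability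
points of the norm on the unit sphere are finite with more than three elements each.
Let `C_X ⊆ X` be a piecewise `C¹` Jordan curve enclosing a convex region and let
`τ : C_X → C_Y` be a surjective isometry onto a piecewise `C¹` curve `C_Y ⊆ Y`.
Then `τ` is affine; in particular `X` and `Y` are linearly isometric. -/
theorem stmt14 {X Y : Type*} [NormedAddCommGroup X] [NormedSpace ℝ X]
    [NormedAddCommGroup Y] [NormedSpace ℝ Y]
    [StrictConvexSpace ℝ X] [StrictConvexSpace ℝ Y]
    (hdimX : Module.finrank ℝ X = 2) (hdimY : Module.finrank ℝ Y = 2)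
    (hNDX : {u : X | ‖u‖ = 1 ∧ ¬ DifferentiableAt ℝ (fun z : X => ‖z‖) u}.Finite)
    (hNDY : {w : Y | ‖w‖ = 1 ∧ ¬ DifferentiableAt ℝ (fun z : Y => ‖z‖) w}.Finite)
    (hcardX : 3 < {u : X | ‖u‖ = 1 ∧ ¬ DifferentiableAt ℝ (fun z : X => ‖z‖) u}.ncard)
    (hcardY : 3 < {w : Y | ‖w‖ = 1 ∧ ¬ DifferentiableAt ℝ (fun z : Y => ‖z‖) w}.ncard)
    (CX : Set X) (CY : Set Y)
    (hCX : IsPiecewiseC1JordanCurve CX)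
    (hCXconv : ∃ K : Set X, IsCompact K ∧ Convex ℝ K ∧
      (interior K).Nonempty ∧ CX = frontier K)
    (hCY : IsPiecewiseC1JordanCurve CY)
    (τ : X → Y)
    (hmap : Set.MapsTo τ CX CY) (hsurj : Set.SurjOn τ CX CY)
    (hiso : ∀ u ∈ CX, ∀ v ∈ CX, ‖τ u - τ v‖ = ‖u - v‖) :
    (∃ A : X →ᵃ[ℝ] Y, Isometry A ∧ ∀ p ∈ CX, A p = τ p) ∧
      Nonempty (X ≃ₗᵢ[ℝ] Y) := by
  obtain ⟨K, hK, hconv, hne, rfl⟩ := hCXconv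
  exact stmt14_general hdimX hdimY (Set.nonempty_of_ncard_ne_zero (by omega)) hK hconv hne hiso
end
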